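/- arXiv:1307.6206 — 3 statements merged into one kernel-verified Lean document; each statement's English description precedes it below -/
import Mathlib

section
/- Let (R,m,k) be a one-dimensional Noetherian reduced local ring with finitely generated integral closure S, and x a minimal reduction of m. Then e(R) = dim_k(S/mS), where e(R) is the Hilbert-Samuel multiplicity of R. -/
open IsLocalRing

/-- The length of a module, expressed as the Krull dimension of its lattice of submodules. -/
noncomputable def moduleLength (R M : Type*) [Ring R] [AddCommGroup M] [Module R M] :
    WithBot ℕ∞ :=
  Order.krullDim (Submodule R M)

open scoped nonZeroDivisors

/-- If `g : P → M` is injective with cokernel of finite length, `f` is an injective endomorphism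
of `M` and `h` is an endomorphism of `P` compatible with `f`, then the cokernels of `h` and `f` have
the same length. -/
theorem length_quotient_range_eq {R P M : Type*} [CommRing R] [AddCommGroup P] [Module R P]
    [AddCommGroup M] [Module R M] {g : P →ₗ[R] M} {f : M →ₗ[R] M} {h : P →ₗ[R] P}
    (hg : Function.Injective g) (hf : Function.Injective f) (hgh : ∀ p, g (h p) = f (g p))
    (hfin : Module.length R (M ⧸ LinearMap.range g) ≠ ⊤) :
    Module.length R (P ⧸ LinearMap.range h) = Module.length R (M ⧸ LinearMap.range f) := by
  have hle₁ : LinearMap.range g ≤ (LinearMap.range (f ∘ₗ g)).comap f := by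
    rintro _ ⟨p, rfl⟩
    exact ⟨p, rfl⟩
  have hle₂ : LinearMap.range h ≤ (LinearMap.range (f ∘ₗ g)).comap g := by
    rintro _ ⟨p, rfl⟩
    exact ⟨p, (hgh p).symm⟩
  have hle₃ : LinearMap.range (f ∘ₗ g) ≤ LinearMap.range f := LinearMap.range_comp_le_range _ _
  have hle₄ : LinearMap.range (f ∘ₗ g) ≤ LinearMap.range g := by
    rintro _ ⟨p, rfl⟩
    exact ⟨h p, hgh p⟩
  have h₁ := Module.length_eq_add_of_exact
    (Submodule.mapQ _ _ f hle₁) (Submodule.factor hle₃)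
    (by
      rw [injective_iff_map_eq_zero]
      intro a
      induction a using Submodule.Quotient.induction_on with | _ m
      rw [Submodule.mapQ_apply, Submodule.Quotient.mk_eq_zero, Submodule.Quotient.mk_eq_zero]
      rintro ⟨p, hp⟩
      exact ⟨p, hf hp⟩)
    (Submodule.factor_surjective hle₃)
    (by
      intro a
      induction a using Submodule.Quotient.induction_on with | _ m
      rw [← Submodule.mkQ_apply, Submodule.factor_mk, Submodule.mkQ_apply, Submodule.mkQ_apply,
        Submodule.Quotient.mk_eq_zero]
      constructor
      · rintro ⟨a, rfl⟩
        exact ⟨Submodule.Quotient.mk a, rfl⟩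
      · rintro ⟨a, ha⟩
        induction a using Submodule.Quotient.induction_on with | _ a
        rw [Submodule.mapQ_apply, Submodule.Quotient.eq] at ha
        have := Submodule.sub_mem _ (LinearMap.mem_range_self f a) (hle₃ ha)
        simpa using this)
  have h₂ := Module.length_eq_add_of_exact
    (Submodule.mapQ _ _ g hle₂) (Submodule.factor hle₄)
    (by
      rw [injective_iff_map_eq_zero]
      intro a
      induction a using Submodule.Quotient.induction_on with | _ m
      rw [Submodule.mapQ_apply, Submodule.Quotient.mk_eq_zero, Submodule.Quotient.mk_eq_zero]
      rintro ⟨p, hp⟩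
      exact ⟨p, hg ((hgh p).trans hp)⟩)
    (Submodule.factor_surjective hle₄)
    (by
      intro a
      induction a using Submodule.Quotient.induction_on with | _ m
      rw [← Submodule.mkQ_apply, Submodule.factor_mk, Submodule.mkQ_apply, Submodule.mkQ_apply,
        Submodule.Quotient.mk_eq_zero]
      constructor
      · rintro ⟨a, rfl⟩
        exact ⟨Submodule.Quotient.mk a, rfl⟩
      · rintro ⟨a, ha⟩
        induction a using Submodule.Quotient.induction_on with | _ a
        rw [Submodule.mapQ_apply, Submodule.Quotient.eq] at ha
        have := Submodule.sub_mem _ (LinearMap.mem_range_self g a) (hle₄ ha)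
        simpa using this)
  rw [h₁, add_comm] at h₂
  exact (WithTop.add_right_cancel hfin h₂).symm

/-- An element of an algebra stabilizing a finitely generated submodule that contains a unit is
integral. -/
theorem isIntegral_of_mul_mem_of_isUnit {R A : Type*} [CommRing R] [IsNoetherianRing R]
    [CommRing A] [Algebra R A] {N : Submodule R A} (hN : N.FG) {u : A} (hu : IsUnit u)
    (huN : u ∈ N) {t : A} (ht : ∀ a ∈ N, t * a ∈ N) : IsIntegral R t := by
  have hadj : ∀ s ∈ Algebra.adjoin R {t}, ∀ a ∈ N, s * a ∈ N := by
    intro s hs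
    induction hs using Algebra.adjoin_induction with
    | mem s hs =>
      rw [Set.mem_singleton_iff.mp hs]
      exact ht
    | algebraMap r =>
      intro a ha
      rw [← Algebra.smul_def]
      exact N.smul_mem r ha
    | add s s' _ _ hs hs' =>
      intro a ha
      rw [add_mul]
      exact N.add_mem (hs a ha) (hs' a ha)
    | mul s s' _ _ hs hs' =>
      intro a ha
      rw [mul_assoc]
      exact hs _ (hs' a ha)
  obtain ⟨v, huv⟩ := hu.exists_right_inv
  have hle : (Algebra.adjoin R {t}).toSubmodule ≤ N.map (LinearMap.mulLeft R v) := by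
    intro s hs
    refine ⟨s * u, hadj s hs u huN, ?_⟩
    rw [LinearMap.mulLeft_apply]
    linear_combination s * huv
  have : IsNoetherian R (N.map (LinearMap.mulLeft R v)) :=
    isNoetherian_of_fg_of_noetherian _ (hN.map _)
  have : IsNoetherian R (Algebra.adjoin R {t}).toSubmodule := isNoetherian_of_le hle
  refine IsIntegral.of_mem_of_fg (Algebra.adjoin R {t}) ?_ t
    (Algebra.subset_adjoin (Set.mem_singleton t))
  exact (Submodule.fg_top _).mp (isNoetherian_def.mp this ⊤)

/-- A reduction of the maximal ideal of a reduced local ring of positive dimension which is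
generated by one element is generated by a nonzerodivisor. -/
theorem mem_nonZeroDivisors_of_reduction {R : Type*} [CommRing R] [IsLocalRing R] [IsReduced R]
    (hdim : ringKrullDim R ≠ 0) {x : R} {n : ℕ}
    (hred : maximalIdeal R ^ (n + 1) = Ideal.span {x} * maximalIdeal R ^ n) : x ∈ R⁰ := by
  have hx : ∀ P ∈ minimalPrimes R, x ∉ P := by
    intro P hP hxP
    have hPp : Ideal.IsPrime P := hP.1.1
    have hle : maximalIdeal R ≤ P := by
      refine hPp.le_of_pow_le (n := n + 1) ?_
      rw [hred]
      exact Ideal.mul_le_left.trans ((Ideal.span_singleton_le_iff_mem P).mpr hxP)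
    apply hdim
    rw [← ringKrullDimZero_iff_ringKrullDim_eq_zero, Ring.krullDimLE_zero_iff]
    intro I hI
    have hmI : maximalIdeal R ≤ I :=
      hle.trans (hP.2 ⟨hI, bot_le⟩ ((le_maximalIdeal hI.ne_top).trans hle))
    rw [← (maximalIdeal.isMaximal R).eq_of_le hI.ne_top hmI]
    exact maximalIdeal.isMaximal R
  rw [mem_nonZeroDivisors_iff_right]
  intro y hy
  have hmem : y ∈ sInf (⊥ : Ideal R).minimalPrimes := by
    rw [Submodule.mem_sInf]
    intro P hP
    have hPp : Ideal.IsPrime P := hP.1.1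
    exact (hPp.mem_or_mem (hy ▸ P.zero_mem : y * x ∈ P)).resolve_right (hx P hP)
  rw [Ideal.sInf_minimalPrimes] at hmem
  obtain ⟨k, hk⟩ := hmem
  exact eq_zero_of_pow_eq_zero hk

/-- A finitely generated module over a one-dimensional Noetherian ring which is killed by a
nonzerodivisor has finite length. -/
theorem length_ne_top_of_isTorsionBy {R M : Type*} [CommRing R] [IsNoetherianRing R]
    (hdim : ringKrullDim R ≤ 1) [AddCommGroup M] [Module R M] [Module.Finite R M] {c : R}
    (hc : c ∈ R⁰) (hM : Module.IsTorsionBy R M c) : Module.length R M ≠ ⊤ := by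
  have : IsArtinianRing (R ⧸ Ideal.span {c}) := by
    rw [isArtinianRing_iff_isNoetherianRing_krullDimLE_zero]
    refine ⟨inferInstance, ?_⟩
    rw [Ring.krullDimLE_iff]
    have h := (ringKrullDim_quotient_succ_le_of_nonZeroDivisor hc).trans hdim
    rw [← zero_add (1 : WithBot ℕ∞)] at h
    simpa using (ENat.WithBot.add_le_add_one_right_iff).mp h
  have hset : Module.IsTorsionBySet R M (Ideal.span {c} : Ideal R) :=
    (Module.isTorsionBySet_span_singleton_iff c).mpr hM
  let := hset.module
  have : IsScalarTower R (R ⧸ Ideal.span {c}) M := hset.isScalarTower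
  have : Module.Finite (R ⧸ Ideal.span {c}) M := Module.Finite.of_restrictScalars_finite R _ _
  rw [Module.length_eq_of_surjective (R := R ⧸ Ideal.span {c}) (S := R) (M := M)
    Ideal.Quotient.mk_surjective]
  exact Module.length_ne_top

/-- A finite algebra embedding into the total ring of fractions has a common denominator. -/
theorem exists_smul_mem_range_algebraMap (R S : Type*) [CommRing R] [CommRing S] [Algebra R S]
    [Algebra S (FractionRing R)] [IsScalarTower R S (FractionRing R)]
    (hinj : Function.Injective (algebraMap S (FractionRing R))) [Module.Finite R S] :
    ∃ c ∈ R⁰, ∀ s : S, c • s ∈ LinearMap.range (Algebra.linearMap R S) := by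
  classical
  obtain ⟨T, hT⟩ := Module.Finite.fg_top (R := R) (M := S)
  obtain ⟨c, hc⟩ := IsLocalization.exist_integer_multiples_of_finset R⁰
    (T.image (algebraMap S (FractionRing R)))
  refine ⟨c, c.2, fun s => ?_⟩
  have hle : Submodule.span R (T : Set S) ≤
      (LinearMap.range (Algebra.linearMap R S)).comap (LinearMap.lsmul R S c) := by
    rw [Submodule.span_le]
    intro t ht
    obtain ⟨r, hr⟩ := hc _ (Finset.mem_image_of_mem _ ht)
    refine ⟨r, hinj ?_⟩
    rw [Algebra.linearMap_apply, ← IsScalarTower.algebraMap_apply, hr, LinearMap.lsmul_apply,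
      Algebra.smul_def, Algebra.smul_def, map_mul, ← IsScalarTower.algebraMap_apply]
  rw [hT] at hle
  exact hle Submodule.mem_top

/-- A principal reduction of an ideal generates the same ideal in the integral closure. -/
theorem smul_top_eq_range_of_reduction {R S : Type*} [CommRing R] [IsNoetherianRing R]
    [CommRing S] [Algebra R S] [Algebra S (FractionRing R)] [IsScalarTower R S (FractionRing R)]
    [IsIntegralClosure S R (FractionRing R)] {I : Ideal R} {x : R} (hx : x ∈ I) (hx₀ : x ∈ R⁰)
    {n : ℕ} (hred : I ^ (n + 1) = Ideal.span {x} * I ^ n) :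
    I • (⊤ : Submodule R S) = LinearMap.range (LinearMap.lsmul R S x) := by
  apply le_antisymm
  · rw [Submodule.smul_le]
    intro y hy s _
    have hxu : IsUnit (algebraMap R (FractionRing R) x) := IsLocalization.map_units _ (⟨x, hx₀⟩ : R⁰)
    obtain ⟨z, hz⟩ := hxu.exists_right_inv
    have hint : IsIntegral R (z * algebraMap R (FractionRing R) y) := by
      refine isIntegral_of_mul_mem_of_isUnit (R := R)
        (N := Submodule.map (Algebra.linearMap R (FractionRing R)) (I ^ n))
        (Submodule.FG.map _ (IsNoetherian.noetherian _)) (hxu.pow n)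
        ⟨x ^ n, Ideal.pow_mem_pow hx n, by simp⟩ ?_
      rintro _ ⟨a, ha, rfl⟩
      have hya : y * a ∈ Ideal.span {x} * I ^ n := by
        rw [← hred, pow_succ']
        exact Ideal.mul_mem_mul hy ha
      obtain ⟨b, hb, hab⟩ := Ideal.mem_span_singleton_mul.mp hya
      refine ⟨b, hb, ?_⟩
      have hab' := congrArg (algebraMap R (FractionRing R)) hab
      rw [map_mul, map_mul] at hab'
      rw [Algebra.linearMap_apply, Algebra.linearMap_apply]
      linear_combination z * hab' - algebraMap R (FractionRing R) b * hz
    obtain ⟨t, ht⟩ := (IsIntegralClosure.isIntegral_iff (A := S)).mp hint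
    refine ⟨t * s, IsIntegralClosure.algebraMap_injective S R (FractionRing R) ?_⟩
    rw [LinearMap.lsmul_apply, Algebra.smul_def, Algebra.smul_def, map_mul, map_mul, map_mul, ht,
      ← IsScalarTower.algebraMap_apply, ← IsScalarTower.algebraMap_apply]
    linear_combination
      algebraMap R (FractionRing R) y * algebraMap S (FractionRing R) s * hz
  · rintro _ ⟨s, rfl⟩
    exact Submodule.smul_mem_smul hx Submodule.mem_top

/-- Let `(R, m, k)` be a one-dimensional Noetherian reduced local ring with
finitely generated integral closure `S` (in the total ring of fractions), and `x` a minimal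
reduction of `m`.  Then `e(R) = dim_k (S/mS)`, where the Hilbert–Samuel multiplicity `e(R)` is
computed as `λ_R(R/xR)` (valid since `x` is a minimal reduction of `m` in a one-dimensional
Cohen-Macaulay local ring). -/
theorem stmt4 (R S : Type*) [CommRing R] [IsLocalRing R] [IsNoetherianRing R] [IsReduced R]
    (hdim : ringKrullDim R = 1)
    [CommRing S] [Algebra R S] [Algebra S (FractionRing R)]
    [IsScalarTower R S (FractionRing R)]
    [IsIntegralClosure S R (FractionRing R)]
    [Module.Finite R S]
    (x : R) (hx : x ∈ maximalIdeal R)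
    (hred : ∃ n : ℕ, maximalIdeal R ^ (n + 1) = Ideal.span {x} * maximalIdeal R ^ n)
    (e : ℕ) (he : (e : WithBot ℕ∞) = moduleLength R (R ⧸ Ideal.span {x})) :
    e = Module.finrank (R ⧸ maximalIdeal R)
      (S ⧸ (maximalIdeal R • (⊤ : Submodule R S))) := by
  obtain ⟨n, hn⟩ := hred
  have hx₀ : x ∈ R⁰ := mem_nonZeroDivisors_of_reduction (by rw [hdim]; exact one_ne_zero) hn
  have hSK : Function.Injective (algebraMap S (FractionRing R)) :=
    IsIntegralClosure.algebraMap_injective S R (FractionRing R)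
  have hRS : Function.Injective (Algebra.linearMap R S) := by
    have h := IsFractionRing.injective R (FractionRing R)
    rw [IsScalarTower.algebraMap_eq R S (FractionRing R), RingHom.coe_comp] at h
    exact h.of_comp
  have hxS : Function.Injective (LinearMap.lsmul R S x) := by
    have hxu : IsUnit (algebraMap R (FractionRing R) x) :=
      IsLocalization.map_units _ (⟨x, hx₀⟩ : R⁰)
    intro a b hab
    apply hSK
    apply hxu.mul_left_cancel
    have h := congrArg (algebraMap S (FractionRing R)) hab
    simpa [Algebra.smul_def, ← IsScalarTower.algebraMap_apply] using h
  obtain ⟨c, hc, hcS⟩ := exists_smul_mem_range_algebraMap R S hSK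
  have hfin : Module.length R (S ⧸ LinearMap.range (Algebra.linearMap R S)) ≠ ⊤ := by
    refine length_ne_top_of_isTorsionBy hdim.le hc fun a => ?_
    induction a using Submodule.Quotient.induction_on with | _ s
    rw [← Submodule.Quotient.mk_smul, Submodule.Quotient.mk_eq_zero]
    exact hcS s
  have hlen := length_quotient_range_eq (h := LinearMap.lsmul R R x) hRS hxS
    (fun p => by simp [Algebra.smul_def]) hfin
  have hspan : LinearMap.range (LinearMap.lsmul R R x) = Ideal.span {x} := by
    ext y
    simp [Ideal.mem_span_singleton', mul_comm]
  rw [hspan, ← smul_top_eq_range_of_reduction hx hx₀ hn] at hlen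
  rw [moduleLength, ← Module.coe_length, hlen] at he
  have he' : (e : ℕ∞) = Module.length R (S ⧸ (maximalIdeal R • (⊤ : Submodule R S))) :=
    WithBot.coe_injective he
  have : Module.Finite (R ⧸ maximalIdeal R) (S ⧸ (maximalIdeal R • (⊤ : Submodule R S))) :=
    Module.Finite.of_restrictScalars_finite R _ _
  let := Ideal.Quotient.field (maximalIdeal R)
  rw [Module.length_eq_of_surjective (R := R ⧸ maximalIdeal R) (S := R)
    Ideal.Quotient.mk_surjective, Module.length_eq_finrank] at he'
  exact_mod_cast he'
end

section
/- Let (R,m,k) be a one-dimensional Cohen-Macaulay standard graded ring over an uncountable field k whose h-vector is (1,n) with n ≥ 3 (equivalently, R has minimal multiplicity and embedding dimension n+1 ≥ 4). Then there exist uncountably many pairwise non-isomorphic (as graded modules, even up to shift) graded ideals of the form I_α = (x, u + αv), α ∈ k, where x is a homogeneous minimal reduction of m and x,u,v are part of a basis of m/m². In particular R is not of graded countable Cohen-Macaulay type. -/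
/-- A (ℤ-)graded module over a graded `k`-algebra `R` with grading `𝒜`. -/
structure GrMod (k R : Type) [Field k] [CommRing R] [Algebra k R]
    (𝒜 : ℕ → Submodule k R) where
  M : Type
  [acg : AddCommGroup M]
  [mod : Module R M]
  gr : ℤ → AddSubgroup M
  internal : DirectSum.IsInternal gr
  smul_mem : ∀ (i : ℕ) (j : ℤ) (r : R) (y : M), r ∈ 𝒜 i → y ∈ gr j → r • y ∈ gr (i + j)

attribute [instance] GrMod.acg GrMod.mod

variable (k R : Type) [Field k] [CommRing R] [Algebra k R] (𝒜 : ℕ → Submodule k R)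

/-- Two graded modules are isomorphic up to a shift in degree. -/
def GrIsoUpToShift (N N' : GrMod k R 𝒜) : Prop :=
  ∃ (e : N.M ≃ₗ[R] N'.M) (s : ℤ), ∀ (j : ℤ) (y : N.M), y ∈ N.gr j → e y ∈ N'.gr (j + s)

/-- Two (graded) ideals of `R` are isomorphic as graded modules up to shift. -/
def GrIdealIsoUpToShift (I J : Ideal R) : Prop :=
  ∃ (e : I ≃ₗ[R] J) (s : ℤ), ∀ (d : ℕ) (y : I), (y : R) ∈ 𝒜 d →
    ∃ d' : ℕ, (d' : ℤ) = (d : ℤ) + s ∧ ((e y : R) ∈ 𝒜 d')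

/-- The irrelevant maximal ideal of a (standard) graded ring: generated by elements of
positive degree. -/
def gradedIrrelevant : Ideal R :=
  Ideal.span {r : R | ∃ i : ℕ, 0 < i ∧ r ∈ 𝒜 i}

/-- A maximal Cohen-Macaulay module over a one-dimensional Cohen-Macaulay graded ring with
irrelevant maximal ideal `m`: finitely generated, nonzero, with a nonzerodivisor in `m`
acting regularly (i.e. of depth one). -/
def GrMod.IsMCM (m : Ideal R) (N : GrMod k R 𝒜) : Prop :=
  Module.Finite R N.M ∧ Nontrivial N.M ∧ ∃ r ∈ m, ∀ y : N.M, r • y = 0 → y = 0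

/-- A graded module is indecomposable. -/
def GrMod.Indec (N : GrMod k R 𝒜) : Prop :=
  Nontrivial N.M ∧ ∀ p q : Submodule R N.M, IsCompl p q → p = ⊥ ∨ q = ⊥

/-- `R` has graded countable Cohen-Macaulay type: there are only countably many
indecomposable graded maximal Cohen-Macaulay modules up to isomorphism and shift. -/
def HasGradedCountableCMType (m : Ideal R) : Prop :=
  ∃ F : ℕ → GrMod k R 𝒜, ∀ N : GrMod k R 𝒜,
    GrMod.IsMCM k R 𝒜 m N → GrMod.Indec k R 𝒜 N → ∃ i : ℕ, GrIsoUpToShift k R 𝒜 N (F i)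

section Generic

/-- An uncountable set carrying a symmetric relation with countable neighbourhoods has an
uncountable subset whose distinct elements are pairwise unrelated. -/
theorem exists_not_countable_pairwise_not {X : Type*} (r : X → X → Prop)
    (hr : ∀ a b, r a b → r b a) (S : Set X) (hS : ¬ S.Countable)
    (hc : ∀ a ∈ S, {b | r a b}.Countable) :
    ∃ T ⊆ S, ¬ T.Countable ∧ ∀ a ∈ T, ∀ b ∈ T, a ≠ b → ¬ r a b := by
  obtain ⟨T, hT⟩ := zorn_subset {T : Set X | T ⊆ S ∧ ∀ a ∈ T, ∀ b ∈ T, a ≠ b → ¬ r a b} (by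
    intro c hcS hch
    refine ⟨⋃₀ c, ⟨Set.sUnion_subset fun s hs => (hcS hs).1, ?_⟩,
      fun s hs => Set.subset_sUnion_of_mem hs⟩
    rintro a ⟨s, hs, has⟩ b ⟨t, ht, hbt⟩ hab
    rcases hch.total hs ht with h | h
    · exact (hcS ht).2 a (h has) b hbt hab
    · exact (hcS hs).2 a has b (h hbt) hab)
  refine ⟨T, hT.prop.1, fun hTc => hS ?_, hT.prop.2⟩
  refine (hTc.union (hTc.biUnion fun a ha => hc a (hT.prop.1 ha))).mono ?_
  intro b hb
  by_contra hcon
  simp only [Set.mem_union, Set.mem_iUnion, not_or, not_exists] at hcon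
  refine hcon.1 (hT.le_of_ge (y := insert b T) ⟨Set.insert_subset hb hT.prop.1, ?_⟩
    (Set.subset_insert b T) (Set.mem_insert b T))
  rintro a (rfl | ha) d (rfl | hd) had
  · exact absurd rfl had
  · exact fun h => hcon.2 d hd (hr _ _ h)
  · exact hcon.2 a ha
  · exact hT.prop.2 a ha d hd had

variable {k R : Type} [Field k] [CommRing R] [Algebra k R] {𝒜 : ℕ → Submodule k R}

/-- A shift-homogeneous linear equivalence reflects homogeneity. -/
theorem GrIsoUpToShift.symm {N N' : GrMod k R 𝒜} (h : GrIsoUpToShift k R 𝒜 N N') :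
    GrIsoUpToShift k R 𝒜 N' N := by
  classical
  obtain ⟨e, s, he⟩ := h
  let instN := N.internal.chooseDecomposition
  let _ := N'.internal.chooseDecomposition
  have key : ∀ (y : N.M) (i : ℤ), e (DirectSum.decompose N.gr y i : N.M) =
      (DirectSum.decompose N'.gr (e y) (i + s) : N'.M) := by
    intro y i
    induction y using DirectSum.Decomposition.inductionOn N.gr with
    | zero => simp
    | @homogeneous j m =>
      by_cases hij : j = i
      · subst hij
        rw [DirectSum.decompose_of_mem_same _ m.2,
          DirectSum.decompose_of_mem_same _ (he _ _ m.2)]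
      · rw [DirectSum.decompose_of_mem_ne _ m.2 hij,
          DirectSum.decompose_of_mem_ne _ (he _ _ m.2) (by omega), map_zero]
    | add a b ha hb => simp [DirectSum.decompose_add, ha, hb]
  refine ⟨e.symm, -s, fun j z hz => ?_⟩
  have h1 := key (e.symm z) (j + -s)
  rw [e.apply_symm_apply, neg_add_cancel_right, DirectSum.decompose_of_mem_same _ hz] at h1
  rw [← h1, e.symm_apply_apply]
  exact SetLike.coe_mem _

theorem GrIsoUpToShift.trans {N N' N'' : GrMod k R 𝒜} (h : GrIsoUpToShift k R 𝒜 N N')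
    (h' : GrIsoUpToShift k R 𝒜 N' N'') : GrIsoUpToShift k R 𝒜 N N'' := by
  obtain ⟨e, s, he⟩ := h
  obtain ⟨e', s', he'⟩ := h'
  refine ⟨e.trans e', s + s', fun j y hy => ?_⟩
  rw [← add_assoc]
  exact he' _ _ (he _ _ hy)

variable [GradedAlgebra 𝒜]

open GradedAlgebra in
theorem proj_ext {a b : R} (h : ∀ i, proj 𝒜 i a = proj 𝒜 i b) : a = b := by
  apply (DirectSum.decompose 𝒜).injective
  ext i
  simpa only [GradedAlgebra.proj_apply] using h i

theorem proj_of_mem {a : R} {i : ℕ} (h : a ∈ 𝒜 i) : GradedAlgebra.proj 𝒜 i a = a := by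
  rw [GradedAlgebra.proj_apply, DirectSum.decompose_of_mem_same _ h]

theorem proj_of_mem_ne {a : R} {i j : ℕ} (h : a ∈ 𝒜 i) (hij : i ≠ j) :
    GradedAlgebra.proj 𝒜 j a = 0 := by
  rw [GradedAlgebra.proj_apply, DirectSum.decompose_of_mem_ne _ h hij]

theorem proj_mem (a : R) (i : ℕ) : GradedAlgebra.proj 𝒜 i a ∈ 𝒜 i := by
  rw [GradedAlgebra.proj_apply]; exact SetLike.coe_mem _

theorem proj_add_mul {a b : R} {i j : ℕ} (h : b ∈ 𝒜 j) :
    GradedAlgebra.proj 𝒜 (i + j) (a * b) = GradedAlgebra.proj 𝒜 i a * b := by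
  simp only [GradedAlgebra.proj_apply]
  exact DirectSum.coe_decompose_mul_add_of_right_mem 𝒜 h

theorem proj_mul_of_lt {a b : R} {i j : ℕ} (h : b ∈ 𝒜 j) (hij : i < j) :
    GradedAlgebra.proj 𝒜 i (a * b) = 0 := by
  simp only [GradedAlgebra.proj_apply]
  exact DirectSum.coe_decompose_mul_of_right_mem_of_not_le 𝒜 h (not_le.mpr hij)

theorem mem_of_forall_proj {a : R} {i : ℕ} (h : ∀ j, j ≠ i → GradedAlgebra.proj 𝒜 j a = 0) :
    a ∈ 𝒜 i := by
  have : a = GradedAlgebra.proj 𝒜 i a := by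
    refine proj_ext (𝒜 := 𝒜) fun j => ?_
    by_cases hj : j = i
    · subst hj; rw [proj_of_mem (proj_mem a j)]
    · rw [h j hj, proj_of_mem_ne (proj_mem a i) (Ne.symm hj)]
  rw [this]; exact proj_mem a i

theorem proj_mul_eq_sum (a b : R) (d : ℕ) : GradedAlgebra.proj 𝒜 d (a * b) =
    ∑ ij ∈ Finset.HasAntidiagonal.antidiagonal d, GradedAlgebra.proj 𝒜 ij.1 a * GradedAlgebra.proj 𝒜 ij.2 b := by
  simp only [GradedAlgebra.proj_apply, DirectSum.decompose_mul,
    DirectSum.coe_mul_apply_eq_sum_antidiagonal]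

variable (𝒜) in
/-- The elements of an ideal that are homogeneous of degree `j : ℤ`. -/
def idealGr (I : Ideal R) (j : ℤ) : AddSubgroup I where
  carrier := {y | ∀ i : ℕ, (i : ℤ) ≠ j → GradedAlgebra.proj 𝒜 i (y : R) = 0}
  zero_mem' := by intro i _; simp
  add_mem' := by
    intro a b ha hb i hi
    rw [AddMemClass.coe_add, map_add, ha i hi, hb i hi, add_zero]
  neg_mem' := by
    intro a ha i hi
    rw [NegMemClass.coe_neg, map_neg, ha i hi, neg_zero]

theorem mem_idealGr {I : Ideal R} {j : ℤ} {y : I} : y ∈ idealGr 𝒜 I j ↔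
    ∀ i : ℕ, (i : ℤ) ≠ j → GradedAlgebra.proj 𝒜 i (y : R) = 0 := Iff.rfl

theorem mem_idealGr_natCast {I : Ideal R} {d : ℕ} {y : I} :
    y ∈ idealGr 𝒜 I d ↔ (y : R) ∈ 𝒜 d :=
  ⟨fun h => mem_of_forall_proj fun j hj => h j (by exact_mod_cast hj),
    fun h i hi => proj_of_mem_ne h fun h' => hi (by exact_mod_cast h'.symm)⟩

theorem eq_zero_of_mem_idealGr {I : Ideal R} {j : ℤ} {y : I} (h : y ∈ idealGr 𝒜 I j)
    (hj : j < 0) : y = 0 := by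
  apply Subtype.ext
  refine proj_ext (𝒜 := 𝒜) fun i => ?_
  rw [h i (by omega)]; simp

theorem idealGr_isInternal {I : Ideal R} (hI : I.IsHomogeneous 𝒜) :
    DirectSum.IsInternal (idealGr 𝒜 I) := by
  classical
  constructor
  · rw [injective_iff_map_eq_zero]
    intro f hf
    have key : ∀ i : ℕ, GradedAlgebra.proj 𝒜 i ((f (i : ℤ) : I) : R) = 0 := by
      intro i
      have h0 : GradedAlgebra.proj 𝒜 i
          ((DirectSum.coeAddMonoidHom (idealGr 𝒜 I) f : I) : R) = 0 := by
        rw [hf]; simp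
      rw [DirectSum.coeAddMonoidHom_eq_dfinsuppSum, DFinsupp.sum, AddSubmonoidClass.coe_finsetSum,
        map_sum] at h0
      by_cases hi : (i : ℤ) ∈ DFinsupp.support f
      · rwa [Finset.sum_eq_single (i : ℤ) (fun j _ hj => (f j).2 i hj.symm)
          (fun h => absurd hi h)] at h0
      · have hz := DFinsupp.notMem_support_iff.mp hi
        rw [show f (i : ℤ) = 0 from hz]
        simp
    ext j
    refine proj_ext (𝒜 := 𝒜) fun i => ?_
    by_cases hij : (i : ℤ) = j
    · subst hij; rw [key]; simp
    · rw [(f j).2 i hij]; simp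
  · intro y
    have hmem : ∀ i, GradedAlgebra.proj 𝒜 i (y : R) ∈ I := fun i => hI i y.2
    have hgr : ∀ i : ℕ, (⟨_, hmem i⟩ : I) ∈ idealGr 𝒜 I i := fun i =>
      mem_idealGr_natCast.mpr (proj_mem _ _)
    refine ⟨∑ i ∈ (DirectSum.decompose 𝒜 (y : R)).support,
      DirectSum.of (fun j => idealGr 𝒜 I j) (i : ℤ) ⟨_, hgr i⟩, ?_⟩
    apply Subtype.ext
    simp only [map_sum, DirectSum.coeAddMonoidHom_of, AddSubmonoidClass.coe_finsetSum]
    exact DirectSum.sum_support_decompose 𝒜 (y : R)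

/-- A homogeneous ideal as a graded module. -/
def idealGrMod (I : Ideal R) (hI : I.IsHomogeneous 𝒜) : GrMod k R 𝒜 where
  M := I
  gr := idealGr 𝒜 I
  internal := idealGr_isInternal hI
  smul_mem := by
    intro i j r y hr hy l hl
    rw [Submodule.coe_smul, smul_eq_mul, mul_comm]
    by_cases hil : i ≤ l
    · obtain ⟨l, rfl⟩ := Nat.exists_eq_add_of_le hil
      rw [add_comm i l, proj_add_mul hr, hy l (by push_cast at hl; omega), zero_mul]
    · exact proj_mul_of_lt hr (by omega)

theorem GrIdealIsoUpToShift.grIso {I J : Ideal R} (hI : I.IsHomogeneous 𝒜)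
    (hJ : J.IsHomogeneous 𝒜) (h : GrIdealIsoUpToShift k R 𝒜 I J) :
    GrIsoUpToShift k R 𝒜 (idealGrMod I hI) (idealGrMod J hJ) := by
  obtain ⟨e, s, he⟩ := h
  refine ⟨e, s, fun j y hy => ?_⟩
  change I at y
  change y ∈ idealGr 𝒜 I j at hy
  change e y ∈ idealGr 𝒜 J (j + s)
  by_cases hj : j < 0
  · rw [eq_zero_of_mem_idealGr hy hj, map_zero]
    exact zero_mem _
  · obtain ⟨d, rfl⟩ := Int.eq_ofNat_of_zero_le (not_lt.mp hj)
    obtain ⟨d', hd', h'⟩ := he d y (mem_idealGr_natCast.mp hy)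
    rw [← hd']
    exact mem_idealGr_natCast.mpr h'

end Generic

section PairIdeal

variable {k R : Type} [Field k] [CommRing R] [Algebra k R] {𝒜 : ℕ → Submodule k R}
  [GradedAlgebra 𝒜]

theorem isHomogeneous_span_pair {x w : R} (hx : x ∈ 𝒜 1) (hw : w ∈ 𝒜 1) :
    (Ideal.span {x, w}).IsHomogeneous 𝒜 := by
  apply Ideal.homogeneous_span
  rintro y (rfl | rfl)
  · exact ⟨1, hx⟩
  · exact ⟨1, hw⟩

variable (𝒜) in
/-- The ideal generated by two linear forms, as a graded module. -/
abbrev pairGrMod {x w : R} (hx : x ∈ 𝒜 1) (hw : w ∈ 𝒜 1) : GrMod k R 𝒜 :=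
  idealGrMod (Ideal.span {x, w}) (isHomogeneous_span_pair hx hw)

theorem left_mem_pair (x w : R) : x ∈ Ideal.span {x, w} := Ideal.subset_span (by simp)

theorem right_mem_pair (x w : R) : w ∈ Ideal.span {x, w} := Ideal.subset_span (by simp)

theorem proj_zero_eq_zero {x w f : R} (hx : x ∈ 𝒜 1) (hw : w ∈ 𝒜 1)
    (hf : f ∈ Ideal.span {x, w}) : GradedAlgebra.proj 𝒜 0 f = 0 := by
  obtain ⟨a, b, rfl⟩ := Ideal.mem_span_pair.mp hf
  rw [map_add, proj_mul_of_lt hx one_pos, proj_mul_of_lt hw one_pos, add_zero]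

theorem exists_proj_one_eq (h0 : 𝒜 0 = (1 : Submodule k R)) {x w f : R} (hx : x ∈ 𝒜 1)
    (hw : w ∈ 𝒜 1) (hf : f ∈ Ideal.span {x, w}) :
    ∃ p q : k, GradedAlgebra.proj 𝒜 1 f = p • x + q • w := by
  obtain ⟨a, b, rfl⟩ := Ideal.mem_span_pair.mp hf
  have hs : ∀ r : R, ∃ c : k, algebraMap k R c = GradedAlgebra.proj 𝒜 0 r := fun r =>
    Submodule.mem_one.mp (h0 ▸ proj_mem r 0)
  obtain ⟨p, hp⟩ := hs a
  obtain ⟨q, hq⟩ := hs b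
  refine ⟨p, q, ?_⟩
  have h1 := proj_add_mul (a := a) (i := 0) hx
  have h2 := proj_add_mul (a := b) (i := 0) hw
  rw [zero_add] at h1 h2
  rw [map_add, h1, h2, ← hp, ← hq, Algebra.smul_def, Algebra.smul_def]

/-- A graded isomorphism between two ideals of the form `(x, w)` is given by a matrix of
scalars in the generators. -/
theorem exists_of_pair_iso (h0 : 𝒜 0 = (1 : Submodule k R)) {x w w' : R}
    (hx : x ∈ 𝒜 1) (hw : w ∈ 𝒜 1) (hw' : w' ∈ 𝒜 1) (hx0 : x ≠ 0) (hw0 : w ≠ 0)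
    (h : GrIsoUpToShift k R 𝒜 (pairGrMod 𝒜 hx hw) (pairGrMod 𝒜 hx hw')) :
    ∃ p q r t : k, w * (p • x + q • w') = x * (r • x + t • w') ∧
      p • x + q • w' ≠ 0 ∧ r • x + t • w' ≠ 0 := by
  obtain ⟨e, s, he⟩ := h
  change ∀ (j : ℤ) (y : Ideal.span {x, w}), y ∈ idealGr 𝒜 _ j → e y ∈ idealGr 𝒜 _ (j + s) at he
  change Ideal.span {x, w} ≃ₗ[R] Ideal.span {x, w'} at e
  set X : Ideal.span {x, w} := ⟨x, left_mem_pair x w⟩ with hX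
  set W : Ideal.span {x, w} := ⟨w, right_mem_pair x w⟩ with hW
  have heX : e X ∈ idealGr 𝒜 _ (1 + s) := he 1 X ((mem_idealGr_natCast (d := 1)).mpr hx)
  have heW : e W ∈ idealGr 𝒜 _ (1 + s) := he 1 W ((mem_idealGr_natCast (d := 1)).mpr hw)
  have heX0 : ((e X : Ideal.span {x, w'}) : R) ≠ 0 := by
    intro h
    have : X = 0 := e.map_eq_zero_iff.mp (Subtype.ext h)
    exact hx0 (congrArg Subtype.val this)
  have heW0 : ((e W : Ideal.span {x, w'}) : R) ≠ 0 := by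
    intro h
    have : W = 0 := e.map_eq_zero_iff.mp (Subtype.ext h)
    exact hw0 (congrArg Subtype.val this)
  have hs : s = 0 := by
    rcases lt_trichotomy s 0 with h | h | h
    · exfalso
      apply heX0
      refine proj_ext (𝒜 := 𝒜) fun i => ?_
      rw [map_zero]
      rcases Nat.eq_zero_or_pos i with rfl | hi
      · exact proj_zero_eq_zero hx hw' (e X).2
      · exact heX i (by omega)
    · exact h
    · exfalso
      obtain ⟨d, hd⟩ : ∃ d : ℕ, (d : ℤ) = 1 + s := ⟨(1 + s).toNat, by omega⟩
      rw [← hd, mem_idealGr_natCast] at heX heW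
      obtain ⟨a, b, hab⟩ := Ideal.mem_span_pair.mp
        (e.symm ⟨x, left_mem_pair x w'⟩).2
      have h1 : e.symm ⟨x, left_mem_pair x w'⟩ = a • X + b • W := Subtype.ext hab.symm
      have h2 : (⟨x, left_mem_pair x w'⟩ : Ideal.span {x, w'}) = a • e X + b • e W := by
        rw [← map_smul, ← map_smul, ← map_add, ← h1, e.apply_symm_apply]
      have h3 : x = a * (e X : R) + b * (e W : R) := congrArg Subtype.val h2
      apply hx0
      rw [← proj_of_mem hx, h3, map_add, proj_mul_of_lt heX (by omega),
        proj_mul_of_lt heW (by omega), add_zero]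
  subst hs
  rw [add_zero] at heX heW
  obtain ⟨p, q, hpq⟩ := exists_proj_one_eq h0 hx hw' (e X).2
  obtain ⟨r, t, hrt⟩ := exists_proj_one_eq h0 hx hw' (e W).2
  rw [proj_of_mem ((mem_idealGr_natCast (d := 1)).mp heX)] at hpq
  rw [proj_of_mem ((mem_idealGr_natCast (d := 1)).mp heW)] at hrt
  refine ⟨p, q, r, t, ?_, hpq ▸ heX0, hrt ▸ heW0⟩
  rw [← hpq, ← hrt]
  have h1 : w • X = x • W := Subtype.ext (mul_comm w x)
  have h2 : w • e X = x • e W := by rw [← map_smul, ← map_smul, h1]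
  exact congrArg Subtype.val h2

theorem eq_zero_of_mul_self_eq {x f : R} (hx : x ∈ 𝒜 1) (hxreg : x ∈ nonZeroDivisors R)
    (hf : f * f = x * f) (hf0 : GradedAlgebra.proj 𝒜 0 f = 0)
    (hf1 : GradedAlgebra.proj 𝒜 1 f = 0) : f = 0 := by
  refine proj_ext (𝒜 := 𝒜) fun i => ?_
  rw [map_zero]
  induction i using Nat.strong_induction_on with
  | _ i ih =>
    have h1 := proj_add_mul (𝒜 := 𝒜) (a := f) (i := i) hx
    rw [mul_comm, ← hf, proj_mul_eq_sum, Finset.sum_eq_zero] at h1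
    · exact (mul_right_mem_nonZeroDivisors_eq_zero_iff hxreg).mp h1.symm
    · rintro ⟨a, b⟩ hab
      rw [Finset.HasAntidiagonal.mem_antidiagonal] at hab
      dsimp only at hab ⊢
      by_cases ha : a ≤ 1
      · have : GradedAlgebra.proj 𝒜 a f = 0 := by
          interval_cases a
          · exact hf0
          · exact hf1
        rw [this, zero_mul]
      · by_cases hb : b ≤ 1
        · have : GradedAlgebra.proj 𝒜 b f = 0 := by
            interval_cases b
            · exact hf0
            · exact hf1
          rw [this, mul_zero]
        · rw [ih a (by omega), zero_mul]

theorem pairGrMod_isMCM {m : Ideal R} {x w : R} (hx : x ∈ 𝒜 1) (hw : w ∈ 𝒜 1) (hxm : x ∈ m)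
    (hx0 : x ≠ 0) (hxreg : x ∈ nonZeroDivisors R) :
    GrMod.IsMCM k R 𝒜 m (pairGrMod 𝒜 hx hw) := by
  refine ⟨?_, ?_, x, hxm, ?_⟩
  · change Module.Finite R (Ideal.span {x, w})
    exact Module.Finite.span_of_finite R (Set.toFinite _)
  · change Nontrivial (Ideal.span {x, w})
    exact ⟨⟨x, left_mem_pair x w⟩, 0, fun h => hx0 (congrArg Subtype.val h)⟩
  · intro y hy
    change Ideal.span {x, w} at y
    have : x * (y : R) = 0 := congrArg Subtype.val hy
    exact Subtype.ext ((mul_left_mem_nonZeroDivisors_eq_zero_iff hxreg).mp this)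

/-- The ideal `(x, w)` is indecomposable as soon as no idempotent of the total ring of fractions
of the form `p + q w / x` with `q ≠ 0` stabilizes it. -/
theorem pairGrMod_indec (h0 : 𝒜 0 = (1 : Submodule k R)) {x w : R} (hx : x ∈ 𝒜 1)
    (hw : w ∈ 𝒜 1) (hx0 : x ≠ 0) (hxreg : x ∈ nonZeroDivisors R)
    (H : ∀ p q r t : k, (p • x + q • w) * (p • x + q • w) = x * (p • x + q • w) →
      (p • x + q • w) * w = x * (r • x + t • w) → q = 0) :
    GrMod.Indec k R 𝒜 (pairGrMod 𝒜 hx hw) := by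
  refine ⟨?_, ?_⟩
  · change Nontrivial (Ideal.span {x, w})
    exact ⟨⟨x, left_mem_pair x w⟩, 0, fun h => hx0 (congrArg Subtype.val h)⟩
  change ∀ P Q : Submodule R (Ideal.span {x, w}), IsCompl P Q → P = ⊥ ∨ Q = ⊥
  intro P Q hPQ
  set X : Ideal.span {x, w} := ⟨x, left_mem_pair x w⟩ with hX
  set W : Ideal.span {x, w} := ⟨w, right_mem_pair x w⟩ with hW
  obtain ⟨π, hπ, hP, hQ⟩ : ∃ π : Ideal.span {x, w} →ₗ[R] Ideal.span {x, w},
      (∀ y, π (π y) = π y) ∧ (∀ y ∈ P, π y = y) ∧ (∀ y ∈ Q, π y = 0) := by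
    refine ⟨Submodule.projection P Q hPQ, fun y => ?_, fun y hy => ?_, fun y hy => ?_⟩
    · exact Submodule.projection_apply_left hPQ ⟨_, Submodule.projection_apply_mem hPQ y⟩
    · exact Submodule.projection_apply_left hPQ ⟨y, hy⟩
    · exact (Submodule.projection_apply_eq_zero_iff hPQ).mpr hy
  have hcomm : ∀ y : Ideal.span {x, w}, x * (π y : R) = (y : R) * (π X : R) := by
    intro y
    have h1 : x • y = (y : R) • X := Subtype.ext (mul_comm x (y : R))
    have h2 : x • π y = (y : R) • π X := by rw [← map_smul, ← map_smul, h1]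
    exact congrArg Subtype.val h2
  set f : R := (π X : R) with hf
  have hff : f * f = x * f := by
    have := hcomm (π X)
    rw [hπ] at this
    exact this.symm
  have hfI : f ∈ Ideal.span {x, w} := (π X).2
  have hf0 : GradedAlgebra.proj 𝒜 0 f = 0 := proj_zero_eq_zero hx hw hfI
  obtain ⟨p, q, hpq⟩ := exists_proj_one_eq h0 hx hw hfI
  obtain ⟨r, t, hrt⟩ := exists_proj_one_eq h0 hx hw (π W).2
  have hsq : (p • x + q • w) * (p • x + q • w) = x * (p • x + q • w) := by
    have h1 := congrArg (GradedAlgebra.proj 𝒜 (1 + 1)) hff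
    rw [mul_comm x f, proj_add_mul hx, proj_mul_eq_sum] at h1
    have h2 : Finset.HasAntidiagonal.antidiagonal (1 + 1) = {(0, 2), (1, 1), (2, 0)} := rfl
    rw [h2, Finset.sum_insert (by decide), Finset.sum_insert (by decide),
      Finset.sum_singleton] at h1
    simp only [hf0, hpq, zero_mul, mul_zero, zero_add, add_zero] at h1
    rw [h1, mul_comm]
  have hmw : (p • x + q • w) * w = x * (r • x + t • w) := by
    have h1 := congrArg (GradedAlgebra.proj 𝒜 (1 + 1)) (hcomm W)
    rw [mul_comm, proj_add_mul hx, mul_comm (W : R), proj_add_mul hw, hrt, hpq] at h1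
    rw [mul_comm x, h1]
  have hq := H p q r t hsq hmw
  rw [hq, zero_smul, add_zero] at hpq hsq
  have hp : p = 0 ∨ p = 1 := by
    have h1 : x * ((p * p - p) • x) = 0 := by
      simp only [Algebra.smul_def, map_sub, map_mul] at hsq ⊢
      linear_combination hsq
    have h2 := (mul_left_mem_nonZeroDivisors_eq_zero_iff hxreg).mp h1
    rcases smul_eq_zero.mp h2 with h | h
    · have : p * (p - 1) = 0 := by linear_combination h
      rcases mul_eq_zero.mp this with h | h
      · exact Or.inl h
      · exact Or.inr (sub_eq_zero.mp h)
    · exact absurd h hx0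
  rcases hp with rfl | rfl
  · left
    rw [zero_smul] at hpq
    have hfz := eq_zero_of_mul_self_eq hx hxreg hff hf0 hpq
    rw [eq_bot_iff]
    intro y hy
    have h1 := hcomm y
    rw [hP y hy, hfz, mul_zero] at h1
    exact Subtype.ext ((mul_left_mem_nonZeroDivisors_eq_zero_iff hxreg).mp h1)
  · right
    rw [one_smul] at hpq
    have hfz : x - f = 0 := eq_zero_of_mul_self_eq hx hxreg (by linear_combination hff)
      (by rw [map_sub, hf0, proj_of_mem_ne hx one_ne_zero, sub_zero])
      (by rw [map_sub, hpq, proj_of_mem hx, sub_self])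
    rw [eq_bot_iff]
    intro y hy
    have h1 := hcomm y
    rw [hQ y hy, ← sub_eq_zero.mp hfz] at h1
    have h2 : (y : R) * x = 0 := by rw [← h1]; simp
    exact Subtype.ext ((mul_right_mem_nonZeroDivisors_eq_zero_iff hxreg).mp h2)

end PairIdeal

section Family

variable {k R : Type} [Field k] [CommRing R] [Algebra k R] {𝒜 : ℕ → Submodule k R}
  [GradedAlgebra 𝒜]

theorem linearIndependent_triple_iff {x u v : R} : LinearIndependent k ![x, u, v] ↔
    ∀ a b c : k, a • x + b • u + c • v = 0 → a = 0 ∧ b = 0 ∧ c = 0 := by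
  rw [Fintype.linearIndependent_iff]
  constructor
  · intro h a b c habc
    have := h ![a, b, c] (by simpa [Fin.sum_univ_three] using habc)
    exact ⟨this 0, this 1, this 2⟩
  · intro h g hg
    have := h (g 0) (g 1) (g 2) (by simpa [Fin.sum_univ_three] using hg)
    intro i
    fin_cases i
    · exact this.1
    · exact this.2.1
    · exact this.2.2

theorem ne_zero_of_linearIndependent {x u v : R} (h : LinearIndependent k ![x, u, v]) (α : k) :
    u + α • v ≠ 0 := by
  intro h'
  have := linearIndependent_triple_iff.mp h 0 1 α (by rw [zero_smul, one_smul, zero_add, h'])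
  exact one_ne_zero this.2.1

theorem exists_notMem_span_triple {V : Submodule k R} (hV : 4 ≤ Module.finrank k V) (a b c : R) :
    ∃ v ∈ V, v ∉ Submodule.span k {a, b, c} := by
  classical
  by_contra! h
  have hle : V ≤ Submodule.span k (({a, b, c} : Finset R) : Set R) := by
    intro v hv
    simpa using h v hv
  have h1 := Submodule.finrank_mono hle
  have h2 := finrank_span_finset_le_card (R := k) ({a, b, c} : Finset R)
  have h3 : ({a, b, c} : Finset R).card ≤ 3 := Finset.card_le_three
  simp only [Set.finrank] at h2
  omega

/-- Comparing two ideals `(x, u + α v)` through a linear functional that vanishes on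
`x, u, v`. -/
theorem functional_eq_zero_of_iso (h0 : 𝒜 0 = (1 : Submodule k R)) {x u v c₁ c₂ c₃ : R}
    (hx : x ∈ 𝒜 1) (hu : u ∈ 𝒜 1) (hv : v ∈ 𝒜 1) (hxreg : x ∈ nonZeroDivisors R)
    (hli : LinearIndependent k ![x, u, v])
    (h₁ : u * u = x * c₁) (h₂ : u * v = x * c₂) (h₃ : v * v = x * c₃)
    (ψ : R →ₗ[k] k) (hψx : ψ x = 0) (hψu : ψ u = 0) (hψv : ψ v = 0) {α β : k} (hαβ : α ≠ β)
    (h : GrIsoUpToShift k R 𝒜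
      (pairGrMod 𝒜 hx (add_mem hu (Submodule.smul_mem _ α hv)))
      (pairGrMod 𝒜 hx (add_mem hu (Submodule.smul_mem _ β hv)))) :
    ψ c₁ + (α + β) * ψ c₂ + α * β * ψ c₃ = 0 := by
  have hli' := linearIndependent_triple_iff.mp hli
  obtain ⟨p, q, r, t, h1, h2, -⟩ := exists_of_pair_iso h0 hx _ _ (hli.ne_zero 0)
    (ne_zero_of_linearIndependent hli α) h
  have h3 : x * (p • (u + α • v) + q • (c₁ + (α + β) • c₂ + (α * β) • c₃)
      - (r • x + t • (u + β • v))) = 0 := by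
    simp only [Algebra.smul_def, map_add, map_mul] at h1 ⊢
    linear_combination h1 - algebraMap k R q * (h₁ + (algebraMap k R α + algebraMap k R β) * h₂
      + algebraMap k R α * algebraMap k R β * h₃)
  have h4 := (mul_left_mem_nonZeroDivisors_eq_zero_iff hxreg).mp h3
  have h5 := congrArg ψ h4
  simp only [map_add, map_sub, map_smul, hψx, hψu, hψv, smul_eq_mul, mul_zero, add_zero,
    zero_add, sub_zero, map_zero] at h5
  rcases mul_eq_zero.mp h5 with hq | hq
  · exfalso
    rw [hq, zero_smul, add_zero] at h4
    have h6 := hli' (-r) (p - t) (p * α - t * β) (by rw [← h4]; module)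
    have h7 : p * (α - β) = 0 := by linear_combination h6.2.2 - β * h6.2.1
    have hp : p = 0 := (mul_eq_zero.mp h7).resolve_right (sub_ne_zero.mpr hαβ)
    exact h2 (by rw [hp, hq, zero_smul, zero_smul, add_zero])
  · exact hq

/-- If `w² = γ x²` where `2 = 0` or `γ = 0`, then `(x, w)` is indecomposable. -/
theorem pairGrMod_indec_of_sq (h0 : 𝒜 0 = (1 : Submodule k R)) {x u v : R} (hx : x ∈ 𝒜 1)
    (hu : u ∈ 𝒜 1) (hv : v ∈ 𝒜 1) (hxreg : x ∈ nonZeroDivisors R)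
    (hli : LinearIndependent k ![x, u, v]) (α γ : k)
    (hw : (u + α • v) * (u + α • v) = x * (γ • x)) (h2 : (2 : k) = 0 ∨ γ = 0) :
    GrMod.Indec k R 𝒜 (pairGrMod 𝒜 hx (add_mem hu (Submodule.smul_mem _ α hv))) := by
  refine pairGrMod_indec h0 hx _ (hli.ne_zero 0) hxreg fun p q r t hsq _ => ?_
  have h3 : x * ((p * p + q * q * γ - p) • x + (2 * p * q - q) • (u + α • v)) = 0 := by
    simp only [Algebra.smul_def, map_add, map_sub, map_mul, map_ofNat] at hsq hw ⊢
    linear_combination hsq - algebraMap k R q * algebraMap k R q * hw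
  have h4 := (mul_left_mem_nonZeroDivisors_eq_zero_iff hxreg).mp h3
  obtain ⟨h5, h6, -⟩ := linearIndependent_triple_iff.mp hli (p * p + q * q * γ - p)
    (2 * p * q - q) ((2 * p * q - q) * α) (by rw [← h4]; module)
  rcases h2 with h2 | h2
  · linear_combination p * q * h2 - h6
  · rw [h2] at h5
    have h7 : p * (p - 1) = 0 := by linear_combination h5
    rcases mul_eq_zero.mp h7 with h | h
    · rw [h] at h6; linear_combination -h6
    · rw [sub_eq_zero.mp h] at h6; linear_combination h6

variable (𝒜) in
/-- There are linear forms `u, v` such that uncountably many of the ideals `(x, u + α v)` are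
indecomposable and pairwise non-isomorphic. -/
def HasUncountableFamily {x : R} (hx : x ∈ 𝒜 1) : Prop :=
  ∃ (u v : R) (hu : u ∈ 𝒜 1) (hv : v ∈ 𝒜 1), LinearIndependent k ![x, u, v] ∧
    ∃ T : Set k, ¬ T.Countable ∧
      (∀ α ∈ T, GrMod.Indec k R 𝒜 (pairGrMod 𝒜 hx (add_mem hu (Submodule.smul_mem _ α hv)))) ∧
      ∀ α ∈ T, ∀ β ∈ T, α ≠ β → ¬ GrIsoUpToShift k R 𝒜
        (pairGrMod 𝒜 hx (add_mem hu (Submodule.smul_mem _ α hv)))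
        (pairGrMod 𝒜 hx (add_mem hu (Submodule.smul_mem _ β hv)))

theorem finite_setOf_quadratic {a b c : k} (ha : a ≠ 0) :
    {α : k | a + (α + α) * b + α * α * c = 0}.Finite := by
  have hp : (Polynomial.C a + Polynomial.C (2 * b) * Polynomial.X
      + Polynomial.C c * Polynomial.X ^ 2) ≠ 0 := by
    intro h
    apply ha
    simpa using congrArg (Polynomial.eval 0) h
  refine (Polynomial.finite_setOfPred_isRoot hp).subset fun α hα => ?_
  simp only [Set.mem_ofPred_eq, Polynomial.IsRoot.def] at hα ⊢
  simp
  linear_combination hα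

/-- The case where some linear form does not satisfy a quadratic equation over `k[x]`. -/
theorem hasUncountableFamily_of_sq [Uncountable k] (h0 : 𝒜 0 = (1 : Submodule k R)) {x : R}
    (hx : x ∈ 𝒜 1) (hxreg : x ∈ nonZeroDivisors R) (hx0 : x ≠ 0)
    (hmul : ∀ a ∈ 𝒜 1, ∀ b ∈ 𝒜 1, ∃ c ∈ 𝒜 1, a * b = x * c)
    (hfin : 4 ≤ Module.finrank k (𝒜 1)) {u : R} (hu : u ∈ 𝒜 1)
    (hsq : ∀ p q : k, u * u ≠ x * (p • x + q • u)) : HasUncountableFamily 𝒜 hx := by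
  obtain ⟨c₁, hc₁, h₁⟩ := hmul u hu u hu
  obtain ⟨v, hv, hvn⟩ := exists_notMem_span_triple hfin x u c₁
  obtain ⟨c₂, hc₂, h₂⟩ := hmul u hu v hv
  obtain ⟨c₃, hc₃, h₃⟩ := hmul v hv v hv
  have hvs : ∀ a b c d : k, a • x + b • u + c • c₁ + d • v = 0 → d = 0 := by
    intro a b c d h
    by_contra hd
    refine hvn (Submodule.mem_span_triple.mpr ⟨-(d⁻¹ * a), -(d⁻¹ * b), -(d⁻¹ * c), ?_⟩)
    have h' : d⁻¹ • (a • x + b • u + c • c₁ + d • v) = 0 := by rw [h, smul_zero]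
    have h'' : d⁻¹ • (d • v) = v := inv_smul_smul₀ hd v
    rw [smul_add, h''] at h'
    rw [← sub_eq_zero, ← neg_eq_zero, ← h']
    module
  have hcs : ∀ a b c : k, a • x + b • u + c • c₁ = 0 → c = 0 := by
    intro a b c h
    by_contra hc
    refine hsq (-(c⁻¹ * a)) (-(c⁻¹ * b)) ?_
    rw [h₁]
    congr 1
    have h' : c⁻¹ • (a • x + b • u + c • c₁) = 0 := by rw [h, smul_zero]
    have h'' : c⁻¹ • (c • c₁) = c₁ := inv_smul_smul₀ hc c₁
    rw [smul_add, h''] at h'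
    rw [← sub_eq_zero, ← h']
    module
  have hus : ∀ a b : k, a • x + b • u = 0 → b = 0 := by
    intro a b h
    by_contra hb
    have hu' : u = (-(b⁻¹ * a)) • x := by
      have h' : b⁻¹ • (a • x + b • u) = 0 := by rw [h, smul_zero]
      have h'' : b⁻¹ • (b • u) = u := inv_smul_smul₀ hb u
      rw [smul_add, h''] at h'
      rw [← sub_eq_zero, ← h']
      module
    refine hsq 0 (-(b⁻¹ * a)) ?_
    nth_rewrite 1 [hu']
    simp only [Algebra.smul_def, map_zero]
    ring
  have hli : LinearIndependent k ![x, u, v] := by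
    rw [linearIndependent_triple_iff]
    intro a b c h
    have hc := hvs a b 0 c (by rw [← h]; module)
    rw [hc, zero_smul, add_zero] at h
    have hb := hus a b h
    rw [hb, zero_smul, add_zero] at h
    exact ⟨(smul_eq_zero.mp h).resolve_right hx0, hb, hc⟩
  have hcn : c₁ ∉ Submodule.span k {x, u, v} := by
    intro h
    obtain ⟨a, b, c, habc⟩ := Submodule.mem_span_triple.mp h
    have hc := hvs a b (-1) c (by rw [← habc]; module)
    have h1 := hcs a b (-1) (by rw [← habc, hc]; module)
    exact one_ne_zero (neg_eq_zero.mp h1)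
  obtain ⟨ψ, hψ, hψk⟩ := Submodule.exists_le_ker_of_notMem hcn
  have hψx : ψ x = 0 := hψk (Submodule.subset_span (by simp))
  have hψu : ψ u = 0 := hψk (Submodule.subset_span (by simp))
  have hψv : ψ v = 0 := hψk (Submodule.subset_span (by simp))
  have hSc : ¬ ({α : k | ψ c₁ + (α + α) * ψ c₂ + α * α * ψ c₃ = 0}ᶜ).Countable := by
    intro h
    have h1 := h.union (finite_setOf_quadratic (b := ψ c₂) (c := ψ c₃) hψ).countable
    rw [Set.compl_union_self] at h1
    exact Set.not_countable_univ h1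
  obtain ⟨T, hTS, hT, hTr⟩ := exists_not_countable_pairwise_not
    (fun α β : k => ψ c₁ + (α + β) * ψ c₂ + α * β * ψ c₃ = 0)
    (fun α β h => by rw [← h]; ring) _ hSc (by
      intro α hα
      refine Set.Subsingleton.countable fun β hβ β' hβ' => ?_
      simp only [Set.mem_compl_iff, Set.mem_ofPred_eq] at hα hβ hβ'
      by_contra hne
      have h1 : (β - β') * (ψ c₂ + α * ψ c₃) = 0 := by linear_combination hβ - hβ'
      have h2 := (mul_eq_zero.mp h1).resolve_left (sub_ne_zero.mpr hne)
      exact hα (by linear_combination hβ + (α - β) * h2))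
  refine ⟨u, v, hu, hv, hli, T, hT, fun α hα => ?_, fun α hα β hβ hαβ h => hTr α hα β hβ hαβ
    (functional_eq_zero_of_iso h0 hx hu hv hxreg hli h₁ h₂ h₃ ψ hψx hψu hψv hαβ h)⟩
  refine pairGrMod_indec h0 hx _ hx0 hxreg fun p q r t _ hpq => ?_
  have h3 : x * (p • (u + α • v) + q • (c₁ + (α + α) • c₂ + (α * α) • c₃)
      - (r • x + t • (u + α • v))) = 0 := by
    simp only [Algebra.smul_def, map_add, map_mul] at hpq ⊢
    linear_combination hpq - algebraMap k R q * (h₁ + (algebraMap k R α + algebraMap k R α) * h₂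
      + algebraMap k R α * algebraMap k R α * h₃)
  have h5 := congrArg ψ ((mul_left_mem_nonZeroDivisors_eq_zero_iff hxreg).mp h3)
  simp only [map_add, map_sub, map_smul, hψx, hψu, hψv, smul_eq_mul, mul_zero, add_zero,
    zero_add, sub_zero, map_zero] at h5
  exact (mul_eq_zero.mp h5).resolve_right (hTS hα)

/-- The case where all linear forms satisfy a quadratic equation over `k[x]`, but some product
`u v` is not in the span of `x, u, v` up to the factor `x`. -/
theorem hasUncountableFamily_of_mul [Uncountable k] (h0 : 𝒜 0 = (1 : Submodule k R)) {x : R}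
    (hx : x ∈ 𝒜 1) (hxreg : x ∈ nonZeroDivisors R)
    (hmul : ∀ a ∈ 𝒜 1, ∀ b ∈ 𝒜 1, ∃ c ∈ 𝒜 1, a * b = x * c)
    (hsq : ∀ a ∈ 𝒜 1, ∃ p q : k, a * a = x * (p • x + q • a))
    {u v : R} (hu : u ∈ 𝒜 1) (hv : v ∈ 𝒜 1) (hli : LinearIndependent k ![x, u, v])
    (huv : ∀ p q r : k, u * v ≠ x * (p • x + q • u + r • v)) : HasUncountableFamily 𝒜 hx := by
  have hli' := linearIndependent_triple_iff.mp hli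
  obtain ⟨c₂, hc₂, h₂⟩ := hmul u hu v hv
  have hcn : c₂ ∉ Submodule.span k {x, u, v} := by
    intro h
    obtain ⟨a, b, c, habc⟩ := Submodule.mem_span_triple.mp h
    exact huv a b c (by rw [habc, h₂])
  obtain ⟨ψ, hψ, hψk⟩ := Submodule.exists_le_ker_of_notMem hcn
  have hψx : ψ x = 0 := hψk (Submodule.subset_span (by simp))
  have hψu : ψ u = 0 := hψk (Submodule.subset_span (by simp))
  have hψv : ψ v = 0 := hψk (Submodule.subset_span (by simp))
  obtain ⟨p, q, h₁⟩ := hsq u hu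
  obtain ⟨p', q', h₃⟩ := hsq v hv
  have hlin : ∀ l : k, 2 * l = 0 ∧ (2 * l = 0 → l * q = l * l * q') := by
    intro l
    obtain ⟨a, b, hab⟩ := hsq (u + l • v) (add_mem hu (Submodule.smul_mem _ l hv))
    have h3 : x * ((p • x + q • u) + (2 * l) • c₂ + (l * l) • (p' • x + q' • v)
        - (a • x + b • (u + l • v))) = 0 := by
      simp only [Algebra.smul_def, map_mul, map_ofNat] at hab h₁ h₃ ⊢
      linear_combination hab - h₁ - 2 * algebraMap k R l * h₂
        - algebraMap k R l * algebraMap k R l * h₃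
    have h4 := (mul_left_mem_nonZeroDivisors_eq_zero_iff hxreg).mp h3
    have h5 := congrArg ψ h4
    simp only [map_add, map_sub, map_smul, hψx, hψu, hψv, smul_eq_mul, mul_zero, add_zero,
      zero_add, sub_zero, map_zero] at h5
    refine ⟨(mul_eq_zero.mp h5).resolve_right hψ, fun hl => ?_⟩
    rw [hl, zero_smul, add_zero] at h4
    have h6 := hli' (p + l * l * p' - a) (q - b) (l * l * q' - l * b) (by rw [← h4]; module)
    linear_combination l * h6.2.1 - h6.2.2
  have h2 : (2 : k) = 0 := by simpa using (hlin 1).1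
  have hqq : q = q' := by simpa using (hlin 1).2 (hlin 1).1
  have hq' : q' = 0 := by
    obtain ⟨l, hl⟩ : ∃ l : k, l ∉ ({0, 1} : Set k) := by
      by_contra! h
      exact Set.not_countable_univ (((Set.toFinite ({0, 1} : Set k)).countable).mono
        fun l _ => h l)
    simp only [Set.mem_insert_iff, Set.mem_singleton_iff, not_or] at hl
    have h1 : l * (l - 1) * q' = 0 := by
      have := (hlin l).2 (hlin l).1
      rw [hqq] at this
      linear_combination -this
    exact (mul_eq_zero.mp h1).resolve_left (mul_ne_zero hl.1 (sub_ne_zero.mpr hl.2))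
  rw [hqq, hq', zero_smul, add_zero] at h₁
  rw [hq', zero_smul, add_zero] at h₃
  refine ⟨u, v, hu, hv, hli, Set.univ, Set.not_countable_univ, fun α _ => ?_,
    fun α _ β _ hαβ h => hαβ ?_⟩
  · refine pairGrMod_indec_of_sq h0 hx hu hv hxreg hli α (p + α * α * p') ?_ (Or.inl h2)
    have h2R : (2 : R) = 0 := by rw [← map_ofNat (algebraMap k R), h2, map_zero]
    simp only [Algebra.smul_def, map_add, map_mul] at h₁ h₃ ⊢
    linear_combination h₁ + algebraMap k R α * algebraMap k R α * h₃
      + algebraMap k R α * u * v * h2R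
  · have h3 := functional_eq_zero_of_iso h0 hx hu hv hxreg hli h₁ h₂ h₃ ψ hψx hψu hψv hαβ h
    simp only [map_smul, hψx, smul_zero, mul_zero, add_zero, zero_add] at h3
    have h4 := (mul_eq_zero.mp h3).resolve_right hψ
    linear_combination h4 - β * h2

/-- The case where the linear forms generate a square zero extension. -/
theorem hasUncountableFamily_of_mul_eq_zero [Uncountable k] (h0 : 𝒜 0 = (1 : Submodule k R))
    {x : R} (hx : x ∈ 𝒜 1) (hxreg : x ∈ nonZeroDivisors R)
    {u v : R} (hu : u ∈ 𝒜 1) (hv : v ∈ 𝒜 1) (hli : LinearIndependent k ![x, u, v])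
    (h₁ : u * u = 0) (h₂ : u * v = 0) (h₃ : v * v = 0) : HasUncountableFamily 𝒜 hx := by
  have hli' := linearIndependent_triple_iff.mp hli
  refine ⟨u, v, hu, hv, hli, Set.univ, Set.not_countable_univ, fun α _ => ?_,
    fun α _ β _ hαβ h => ?_⟩
  · refine pairGrMod_indec_of_sq h0 hx hu hv hxreg hli α 0 ?_ (Or.inr rfl)
    simp only [Algebra.smul_def, map_zero]
    linear_combination h₁ + 2 * algebraMap k R α * h₂
      + algebraMap k R α * algebraMap k R α * h₃
  · obtain ⟨p, q, r, t, h1, -, h3⟩ := exists_of_pair_iso h0 hx _ _ (hli.ne_zero 0)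
      (ne_zero_of_linearIndependent hli α) h
    have h4 : x * (p • (u + α • v) - (r • x + t • (u + β • v))) = 0 := by
      simp only [Algebra.smul_def] at h1 ⊢
      linear_combination h1 - algebraMap k R q * (h₁ + (algebraMap k R α + algebraMap k R β) * h₂
        + algebraMap k R α * algebraMap k R β * h₃)
    have h5 := (mul_left_mem_nonZeroDivisors_eq_zero_iff hxreg).mp h4
    have h6 := hli' (-r) (p - t) (p * α - t * β) (by rw [← h5]; module)
    have h7 : t * (α - β) = 0 := by linear_combination h6.2.2 - α * h6.2.1
    have ht : t = 0 := (mul_eq_zero.mp h7).resolve_right (sub_ne_zero.mpr hαβ)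
    exact h3 (by rw [ht, neg_eq_zero.mp h6.1, zero_smul, zero_smul, add_zero])

end Family

section Degenerate

variable {k R : Type} [Field k] [CommRing R] [Algebra k R] {𝒜 : ℕ → Submodule k R}

theorem sq_eq_zero_of_products {x u v w : R} (hxreg : x ∈ nonZeroDivisors R)
    (hu : u ∈ 𝒜 1) (hv : v ∈ 𝒜 1) (hw : w ∈ 𝒜 1)
    (hli : ∀ a b c d : k, a • x + b • u + c • v + d • w = 0 → a = 0 ∧ b = 0 ∧ c = 0 ∧ d = 0)
    (hsq : ∀ a ∈ 𝒜 1, ∃ p q : k, a * a = x * (p • x + q • a))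
    (hpr : ∀ a ∈ 𝒜 1, ∀ b ∈ 𝒜 1, LinearIndependent k ![x, a, b] →
      ∃ p q r : k, a * b = x * (p • x + q • a + r • b))
    (huv : u * v = 0) (huw : u * w = 0) (hvw : v * w = 0) : u * u = 0 := by
  have hx : ∀ {y : R}, x * y = 0 → y = 0 :=
    (mul_left_mem_nonZeroDivisors_eq_zero_iff hxreg).mp
  obtain ⟨p, q, h⟩ := hsq u hu
  have hp : p = 0 := by
    have h1 : x * (x * (p • v)) = 0 := by
      simp only [Algebra.smul_def] at h ⊢
      linear_combination -v * h + (u - x * algebraMap k R q) * huv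
    exact (hli 0 0 p 0 (by simpa using hx (hx h1))).2.2.1
  have hli3 : LinearIndependent k ![x, u + v, u + w] := by
    rw [linearIndependent_triple_iff]
    intro a b c habc
    have := hli a (b + c) b c (by rw [← habc]; module)
    exact ⟨this.1, this.2.2.1, this.2.2.2⟩
  obtain ⟨a, b, c, habc⟩ := hpr _ (add_mem hu hv) _ (add_mem hu hw) hli3
  have h1 : x * (q • u - (a • x + b • (u + v) + c • (u + w))) = 0 := by
    rw [hp] at h
    simp only [Algebra.smul_def, map_zero] at h habc ⊢
    linear_combination habc - h - huv - huw - hvw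
  have h2 := hli (-a) (q - b - c) (-b) (-c) (by rw [← hx h1]; module)
  have hq : q = 0 := by linear_combination h2.2.1 - h2.2.2.1 - h2.2.2.2
  rw [h, hp, hq]
  simp

theorem products_eq_zero_of_scalar {x u v w : R} (hxreg : x ∈ nonZeroDivisors R)
    (hli : ∀ a b c d : k, a • x + b • u + c • v + d • w = 0 → a = 0 ∧ b = 0 ∧ c = 0 ∧ d = 0)
    {f g h : k} (huv : u * v = x * (f • x)) (huw : u * w = x * (g • x))
    (hvw : v * w = x * (h • x)) : u * v = 0 ∧ u * w = 0 ∧ v * w = 0 := by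
  have hx : ∀ {y : R}, x * y = 0 → y = 0 :=
    (mul_left_mem_nonZeroDivisors_eq_zero_iff hxreg).mp
  have h1 : x * (x * (f • w - g • v)) = 0 := by
    simp only [Algebra.smul_def] at huv huw ⊢
    linear_combination v * huw - w * huv
  have h2 : x * (x * (g • v - h • u)) = 0 := by
    simp only [Algebra.smul_def] at hvw huw ⊢
    linear_combination u * hvw - v * huw
  have h3 := hli 0 0 (-g) f (by rw [← hx (hx h1)]; module)
  have h4 := hli 0 (-h) g 0 (by rw [← hx (hx h2)]; module)
  rw [huv, huw, hvw, h3.2.2.2, h4.2.2.1, neg_eq_zero.mp h4.2.1]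
  simp

/-- If all products of linear forms `a b` lie in `x ⟨x, a, b⟩`, then suitable translates of the
linear forms multiply to zero. -/
theorem exists_mul_eq_zero {x : R} (hx1 : x ∈ 𝒜 1) (hxreg : x ∈ nonZeroDivisors R) (hx0 : x ≠ 0)
    (hfin : 4 ≤ Module.finrank k (𝒜 1))
    (hsq : ∀ a ∈ 𝒜 1, ∃ p q : k, a * a = x * (p • x + q • a))
    (hpr : ∀ a ∈ 𝒜 1, ∀ b ∈ 𝒜 1, LinearIndependent k ![x, a, b] →
      ∃ p q r : k, a * b = x * (p • x + q • a + r • b)) :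
    ∃ u v : R, u ∈ 𝒜 1 ∧ v ∈ 𝒜 1 ∧ LinearIndependent k ![x, u, v] ∧
      u * u = 0 ∧ u * v = 0 ∧ v * v = 0 := by
  have hx : ∀ {y : R}, x * y = 0 → y = 0 :=
    (mul_left_mem_nonZeroDivisors_eq_zero_iff hxreg).mp
  obtain ⟨u, hu, hun⟩ := exists_notMem_span_triple hfin x x x
  obtain ⟨v, hv, hvn⟩ := exists_notMem_span_triple hfin x u u
  obtain ⟨w, hw, hwn⟩ := exists_notMem_span_triple hfin x u v
  have aux : ∀ {a b c z : R}, z ∉ Submodule.span k {a, b, c} → ∀ {p q r s : k},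
      p • a + q • b + r • c + s • z = 0 → s = 0 := by
    intro a b c z hz p q r s h
    by_contra hs
    refine hz (Submodule.mem_span_triple.mpr ⟨-(s⁻¹ * p), -(s⁻¹ * q), -(s⁻¹ * r), ?_⟩)
    have h' : s⁻¹ • (p • a + q • b + r • c + s • z) = 0 := by rw [h, smul_zero]
    have h'' : s⁻¹ • (s • z) = z := inv_smul_smul₀ hs z
    rw [smul_add, h''] at h'
    rw [← sub_eq_zero, ← neg_eq_zero, ← h']
    module
  have hli : ∀ a b c d : k, a • x + b • u + c • v + d • w = 0 →
      a = 0 ∧ b = 0 ∧ c = 0 ∧ d = 0 := by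
    intro a b c d h
    have hd := aux hwn h
    rw [hd, zero_smul, add_zero] at h
    have hc := aux hvn (p := a) (q := b) (r := 0) (s := c) (by rw [← h]; module)
    rw [hc, zero_smul, add_zero] at h
    have hb := aux hun (p := a) (q := 0) (r := 0) (s := b) (by rw [← h]; module)
    rw [hb, zero_smul, add_zero] at h
    exact ⟨(smul_eq_zero.mp h).resolve_right hx0, hb, hc, hd⟩
  have key : ∀ {a b c : R}, a ∈ 𝒜 1 → b ∈ 𝒜 1 → c ∈ 𝒜 1 →
      (∀ p q r s : k, p • x + q • a + r • b + s • c = 0 → p = 0 ∧ q = 0 ∧ r = 0 ∧ s = 0) →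
      ∀ {f l m g n m' : k}, a * b = x * (f • x + l • a + m • b) →
      a * c = x * (g • x + n • a + m' • c) → m = m' := by
    intro a b c ha hb hc hl f l m g n m' hab hac
    have hli3 : LinearIndependent k ![x, a, b + c] := by
      rw [linearIndependent_triple_iff]
      intro p q r h
      have := hl p q r r (by rw [← h]; module)
      exact ⟨this.1, this.2.1, this.2.2.1⟩
    obtain ⟨p, q, r, hpqr⟩ := hpr a ha _ (add_mem hb hc) hli3
    have h1 : x * ((f • x + l • a + m • b) + (g • x + n • a + m' • c)
        - (p • x + q • a + r • (b + c))) = 0 := by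
      linear_combination hpqr - hab - hac
    have h2 := hl (f + g - p) (l + n - q) (m - r) (m' - r) (by rw [← hx h1]; module)
    linear_combination h2.2.2.1 - h2.2.2.2
  obtain ⟨f, l, m, huv⟩ := hpr u hu v hv (by
    rw [linearIndependent_triple_iff]
    intro a b c h
    have := hli a b c 0 (by rw [← h]; module)
    exact ⟨this.1, this.2.1, this.2.2.1⟩)
  obtain ⟨g, n, m', huw⟩ := hpr u hu w hw (by
    rw [linearIndependent_triple_iff]
    intro a b c h
    have := hli a b 0 c (by rw [← h]; module)
    exact ⟨this.1, this.2.1, this.2.2.2⟩)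
  obtain ⟨h, n', l', hvw⟩ := hpr v hv w hw (by
    rw [linearIndependent_triple_iff]
    intro a b c h
    have := hli a 0 b c (by rw [← h]; module)
    exact ⟨this.1, this.2.2.1, this.2.2.2⟩)
  obtain rfl : m = m' := key hu hv hw hli huv huw
  obtain rfl : l = l' := key hv hu hw (fun p q r s hh => by
    have := hli p r q s (by rw [← hh]; module)
    exact ⟨this.1, this.2.2.1, this.2.1, this.2.2.2⟩)
    (f := f) (l := m) (by rw [mul_comm, huv]; congr 1; module) hvw
  obtain rfl : n = n' := key hw hu hv (fun p q r s hh => by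
    have := hli p r s q (by rw [← hh]; module)
    exact ⟨this.1, this.2.2.2, this.2.1, this.2.2.1⟩)
    (f := g) (l := m) (g := h) (n := l)
    (by rw [mul_comm, huw]; congr 1; module) (by rw [mul_comm, hvw]; congr 1; module)
  have hU : u - m • x ∈ 𝒜 1 := sub_mem hu (Submodule.smul_mem _ _ hx1)
  have hV : v - l • x ∈ 𝒜 1 := sub_mem hv (Submodule.smul_mem _ _ hx1)
  have hW : w - n • x ∈ 𝒜 1 := sub_mem hw (Submodule.smul_mem _ _ hx1)
  have hLI : ∀ a b c d : k, a • x + b • (u - m • x) + c • (v - l • x) + d • (w - n • x) = 0 →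
      a = 0 ∧ b = 0 ∧ c = 0 ∧ d = 0 := by
    intro a b c d hh
    obtain ⟨h1, rfl, rfl, rfl⟩ := hli (a - b * m - c * l - d * n) b c d (by rw [← hh]; module)
    exact ⟨by linear_combination h1, rfl, rfl, rfl⟩
  obtain ⟨hUV, hUW, hVW⟩ := products_eq_zero_of_scalar hxreg hLI
    (f := f + l * m) (g := g + n * m) (h := h + n * l)
    (by simp only [Algebra.smul_def, map_add, map_mul] at huv ⊢; linear_combination huv)
    (by simp only [Algebra.smul_def, map_add, map_mul] at huw ⊢; linear_combination huw)
    (by simp only [Algebra.smul_def, map_add, map_mul] at hvw ⊢; linear_combination hvw)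
  refine ⟨_, _, hU, hV, ?_, sq_eq_zero_of_products hxreg hU hV hW hLI hsq hpr hUV hUW hVW, hUV,
    sq_eq_zero_of_products hxreg hV hU hW (fun p q r s hh => ?_) hsq hpr
      (by rw [mul_comm, hUV]) hVW hUW⟩
  · rw [linearIndependent_triple_iff]
    intro a b c hh
    have := hLI a b c 0 (by rw [← hh]; module)
    exact ⟨this.1, this.2.1, this.2.2.1⟩
  · have := hLI p r q s (by rw [← hh]; module)
    exact ⟨this.1, this.2.2.1, this.2.1, this.2.2.2⟩

variable [GradedAlgebra 𝒜]

theorem hasUncountableFamily [Uncountable k] (h0 : 𝒜 0 = (1 : Submodule k R))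
    {x : R} (hx : x ∈ 𝒜 1) (hxreg : x ∈ nonZeroDivisors R) (hx0 : x ≠ 0)
    (hmul : ∀ a ∈ 𝒜 1, ∀ b ∈ 𝒜 1, ∃ c ∈ 𝒜 1, a * b = x * c)
    (hfin : 4 ≤ Module.finrank k (𝒜 1)) : HasUncountableFamily 𝒜 hx := by
  by_cases hsq : ∀ a ∈ 𝒜 1, ∃ p q : k, a * a = x * (p • x + q • a)
  · by_cases hpr : ∀ a ∈ 𝒜 1, ∀ b ∈ 𝒜 1, LinearIndependent k ![x, a, b] →
        ∃ p q r : k, a * b = x * (p • x + q • a + r • b)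
    · obtain ⟨u, v, hu, hv, hli, h₁, h₂, h₃⟩ := exists_mul_eq_zero hx hxreg hx0 hfin hsq hpr
      exact hasUncountableFamily_of_mul_eq_zero h0 hx hxreg hu hv hli h₁ h₂ h₃
    · push Not at hpr
      obtain ⟨u, hu, v, hv, hli, huv⟩ := hpr
      exact hasUncountableFamily_of_mul h0 hx hxreg hmul hsq hu hv hli huv
  · push Not at hsq
    obtain ⟨u, hu, huu⟩ := hsq
    exact hasUncountableFamily_of_sq h0 hx hxreg hx0 hmul hfin hu huu

theorem exists_mul_eq_of_reduction {x : R} (hx : x ∈ 𝒜 1)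
    (hmin : (gradedIrrelevant k R 𝒜) ^ 2 = Ideal.span {x} * gradedIrrelevant k R 𝒜)
    {a b : R} (ha : a ∈ 𝒜 1) (hb : b ∈ 𝒜 1) : ∃ c ∈ 𝒜 1, a * b = x * c := by
  have hm : ∀ {y : R}, y ∈ 𝒜 1 → y ∈ gradedIrrelevant k R 𝒜 := fun hy =>
    Ideal.subset_span ⟨1, one_pos, hy⟩
  have h1 : a * b ∈ Ideal.span {x} * gradedIrrelevant k R 𝒜 := by
    rw [← hmin, sq]
    exact Ideal.mul_mem_mul (hm ha) (hm hb)
  obtain ⟨z, -, hz⟩ := Ideal.mem_span_singleton_mul.mp h1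
  refine ⟨GradedAlgebra.proj 𝒜 1 z, proj_mem z 1, ?_⟩
  have h2 := congrArg (GradedAlgebra.proj 𝒜 (1 + 1)) hz
  rw [mul_comm x z, proj_add_mul hx, proj_add_mul hb, proj_of_mem ha] at h2
  rw [← h2, mul_comm]

end Degenerate


/-- Let `(R, m, k)` be a one-dimensional Cohen-Macaulay standard graded
ring over an uncountable field `k` with h-vector `(1, n)`, `n ≥ 3` — equivalently, `R` has
minimal multiplicity (`m² = xm` for a linear nonzerodivisor `x`) and embedding dimension
`n + 1 ≥ 4` (`dim_k 𝒜₁ = n + 1`).  Then there are linear forms `u, v` such that `x, u, v` are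
part of a basis of `m/m²`, and an uncountable subset `T ⊆ k` such that the graded ideals
`I_α = (x, u + αv)`, `α ∈ T`, are pairwise non-isomorphic as graded modules even up to shift.
In particular `R` is not of graded countable Cohen-Macaulay type. -/
theorem stmt12 [Uncountable k] [GradedAlgebra 𝒜]
    (hstd0 : 𝒜 0 = (1 : Submodule k R))
    (hstd : ∀ i : ℕ, 𝒜 (i + 1) = 𝒜 1 * 𝒜 i)
    (hdim : ringKrullDim R = 1)
    (n : ℕ) (hn : 3 ≤ n)
    (x : R) (hx1 : x ∈ 𝒜 1) (hxreg : x ∈ nonZeroDivisors R)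
    (hmin : (gradedIrrelevant k R 𝒜) ^ 2 = Ideal.span {x} * gradedIrrelevant k R 𝒜)
    (hemb : Module.finrank k (𝒜 1) = n + 1) :
    (∃ u v : R, u ∈ 𝒜 1 ∧ v ∈ 𝒜 1 ∧ LinearIndependent k ![x, u, v] ∧
      ∃ T : Set k, ¬ T.Countable ∧ ∀ α ∈ T, ∀ β ∈ T, α ≠ β →
        ¬ GrIdealIsoUpToShift k R 𝒜
            (Ideal.span {x, u + α • v}) (Ideal.span {x, u + β • v})) ∧
    ¬ HasGradedCountableCMType k R 𝒜 (gradedIrrelevant k R 𝒜) := by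
  have hx0 : x ≠ 0 := by
    rintro rfl
    have : Subsingleton R := subsingleton_of_zero_eq_one
      ((mul_left_mem_nonZeroDivisors_eq_zero_iff hxreg).mp (zero_mul 1)).symm
    have h1 : Module.finrank k (𝒜 1) = 0 := Module.finrank_zero_of_subsingleton
    omega
  obtain ⟨u, v, hu, hv, hli, T, hT, hind, hiso⟩ := hasUncountableFamily hstd0 hx1 hxreg hx0
    (fun a ha b hb => exists_mul_eq_of_reduction hx1 hmin ha hb) (by omega)
  refine ⟨⟨u, v, hu, hv, hli, T, hT, fun α hα β hβ hαβ h =>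
    hiso α hα β hβ hαβ (h.grIso _ _)⟩, ?_⟩
  rintro ⟨F, hF⟩
  have hF' : ∀ α : T, ∃ i : ℕ, GrIsoUpToShift k R 𝒜
      (pairGrMod 𝒜 hx1 (add_mem hu (Submodule.smul_mem _ (α : k) hv))) (F i) := fun α =>
    hF _ (pairGrMod_isMCM hx1 _ (Ideal.subset_span ⟨1, one_pos, hx1⟩) hx0 hxreg)
      (hind α α.2)
  choose i hi using hF'
  refine hT (Set.countable_coe_iff.mp (Function.Injective.countable (f := i) fun α β hαβ => ?_))
  by_contra hne
  refine hiso α α.2 β β.2 (fun h => hne (Subtype.ext h)) ((hi α).trans ?_)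
  rw [hαβ]
  exact (hi β).symm
end

section
/- Let (R,m) be a zero-dimensional equicharacteristic complete local ring. Then R has finite Cohen-Macaulay type if and only if R is a hypersurface, i.e., R ≅ k⟦x⟧/(x^m) for some m ≥ 0 (where residue field k), equivalently dim_k(m/m²) ≤ 1. -/
open IsLocalRing

/-- A module is indecomposable. -/
def IsIndecomposableModule (R M : Type*) [Ring R] [AddCommGroup M] [Module R M] : Prop :=
  Nontrivial M ∧ ∀ p q : Submodule R M, IsCompl p q → p = ⊥ ∨ q = ⊥

/-- A zero-dimensional local ring has finite Cohen-Macaulay type: there are only finitely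
many indecomposable finitely generated (equivalently, maximal Cohen-Macaulay) modules up to
isomorphism. -/
def HasFiniteCMType0 (R : Type) [CommRing R] : Prop :=
  ∃ s : Set (ModuleCat R), s.Finite ∧
    ∀ N : ModuleCat R, Module.Finite R N → IsIndecomposableModule R N →
      ∃ M ∈ s, Nonempty ((N : Type) ≃ₗ[R] (M : Type))

section Kronecker

variable {k : Type*} [Field k]

/-- The nilpotent left shift on `Fin n → k`. -/
def leftShift (n : ℕ) (v : Fin n → k) : Fin n → k :=
  fun i => if h : (i : ℕ) + 1 < n then v ⟨i + 1, h⟩ else 0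

theorem leftShift_iterate_apply {n : ℕ} (v : Fin n → k) (j : ℕ) (i : Fin n) :
    ((leftShift n)^[j] v) i = if h : (i : ℕ) + j < n then v ⟨i + j, h⟩ else 0 := by
  induction j generalizing i with
  | zero => simp
  | succ j ih =>
    rw [Function.iterate_succ_apply', leftShift]
    by_cases h : (i : ℕ) + 1 < n
    · rw [dif_pos h, ih]
      simp only [show (i : ℕ) + 1 + j = i + (j + 1) by omega]
    · rw [dif_neg h, dif_neg (by omega)]

theorem exists_iterate_leftShift_eq_single {n : ℕ} {v : Fin (n + 1) → k} (hv : v ≠ 0) :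
    ∃ (j : ℕ) (c : k), c ≠ 0 ∧ (leftShift (n + 1))^[j] v = Pi.single 0 c := by
  classical
  obtain ⟨i, hi, hmax⟩ : ∃ i, v i ≠ 0 ∧ ∀ l, v l ≠ 0 → l ≤ i := by
    have hne : (Finset.univ.filter fun i => v i ≠ 0).Nonempty := by
      obtain ⟨i, hi⟩ := Function.ne_iff.mp hv
      exact ⟨i, by simpa using hi⟩
    refine ⟨Finset.max' _ hne, ?_, fun l hl => Finset.le_max' _ _ (by simpa using hl)⟩
    simpa using Finset.max'_mem _ hne
  refine ⟨i, v i, hi, ?_⟩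
  ext l
  rw [leftShift_iterate_apply]
  by_cases hl : l = 0
  · subst hl
    simp [i.is_le.not_gt]
  · rw [Pi.single_eq_of_ne hl]
    have hpos : 0 < (l : ℕ) := Nat.pos_of_ne_zero fun h => hl (Fin.ext h)
    split_ifs with h
    · by_contra hne
      have := Fin.le_def.mp (hmax _ hne)
      simp at this
      omega
    · rfl

/-- Nonzero shift-invariant submodules of `Fin n → k` meet nontrivially. -/
theorem eq_bot_or_eq_bot_of_leftShift_invariant {R : Type*} [CommRing R] [Algebra R k]
    (hsurj : Function.Surjective (algebraMap R k)) {n : ℕ}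
    {P Q : Submodule R (Fin n → k)} (hP : ∀ v ∈ P, leftShift n v ∈ P)
    (hQ : ∀ v ∈ Q, leftShift n v ∈ Q) (hPQ : Disjoint P Q) : P = ⊥ ∨ Q = ⊥ := by
  rcases n with _ | n
  · left
    exact Subsingleton.elim _ _
  have key : ∀ W : Submodule R (Fin (n + 1) → k), (∀ v ∈ W, leftShift (n + 1) v ∈ W) → W ≠ ⊥ →
      (Pi.single 0 1 : Fin (n + 1) → k) ∈ W := by
    intro W hW hne
    obtain ⟨v, hv, hv0⟩ := W.ne_bot_iff.mp hne
    obtain ⟨j, c, hc, h⟩ := exists_iterate_leftShift_eq_single hv0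
    have hmem : ∀ j, (leftShift (n + 1))^[j] v ∈ W := by
      intro j
      induction j with
      | zero => exact hv
      | succ j ih => rw [Function.iterate_succ_apply']; exact hW _ ih
    obtain ⟨r, hr⟩ := hsurj c⁻¹
    have := W.smul_mem r (hmem j)
    rwa [h, ← Pi.single_smul, Algebra.smul_def, hr, inv_mul_cancel₀ hc] at this
  by_contra! hcon
  have := Submodule.disjoint_def.mp hPQ _ (key P hP hcon.1) (key Q hQ hcon.2)
  simpa using congrFun this 0

end Kronecker

section Local

variable {R : Type*} [CommRing R] [IsLocalRing R]

/-- If the head of `M` carries, through multiplication by `a` and `b`, the shift operator,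
then `M` is indecomposable. -/
theorem isIndecomposableModule_of_leftShift {M : Type*} [AddCommGroup M] [Module R M]
    [IsNoetherian R M] {n : ℕ} (p : M →ₗ[R] (Fin (n + 1) → ResidueField R))
    (hp : Function.Surjective p) (hker : LinearMap.ker p = maximalIdeal R • ⊤) {a b : R}
    (hab : ∀ x y : M, b • x = a • y ↔ p y = leftShift (n + 1) (p x)) :
    IsIndecomposableModule R M := by
  refine ⟨hp.nontrivial, fun P Q hPQ => ?_⟩
  have hmem : ∀ {P Q : Submodule R M} (h : IsCompl P Q) (x : M), p x = 0 →
      P.projection Q h x ∈ maximalIdeal R • P := by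
    intro P Q h x hx
    rw [← LinearMap.mem_ker, hker] at hx
    have := Submodule.mem_map_of_mem (f := P.projection Q h) hx
    rwa [Submodule.map_smul'', Submodule.map_top, Submodule.range_projection] at this
  have hinv : ∀ {P Q : Submodule R M} (_ : IsCompl P Q), ∀ v ∈ P.map p,
      leftShift (n + 1) v ∈ P.map p := by
    rintro P Q h _ ⟨x, hx, rfl⟩
    obtain ⟨y, hy⟩ := hp (leftShift (n + 1) (p x))
    have hxy := congrArg (P.projection Q h) ((hab x y).mpr hy)
    rw [map_smul, map_smul, (Submodule.projection_eq_self_iff h x).mpr hx] at hxy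
    exact ⟨_, Submodule.projection_apply_mem h y, (hab _ _).mp hxy⟩
  have hdisj : Disjoint (P.map p) (Q.map p) := by
    rw [Submodule.disjoint_def]
    rintro _ ⟨x, hx, rfl⟩ ⟨y, hy, hxy⟩
    have := hmem hPQ (x - y) (by rw [map_sub, hxy, sub_self])
    rw [map_sub, (Submodule.projection_eq_self_iff hPQ x).mpr hx,
      (Submodule.projection_apply_eq_zero_iff hPQ).mpr hy, sub_zero] at this
    rw [← LinearMap.mem_ker, hker]
    exact Submodule.smul_mono le_rfl le_top this
  have hzero : ∀ {P Q : Submodule R M} (_ : IsCompl P Q), P.map p = ⊥ → P = ⊥ := by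
    intro P Q h hP
    refine Submodule.eq_bot_of_le_smul_of_le_jacobson_bot (maximalIdeal R) P
      (IsNoetherian.noetherian P) (fun x hx => ?_) (maximalIdeal_le_jacobson _)
    have := hmem h x ((Submodule.mem_bot R).mp (hP ▸ Submodule.mem_map_of_mem hx))
    rwa [(Submodule.projection_eq_self_iff h x).mpr hx] at this
  exact (eq_bot_or_eq_bot_of_leftShift_invariant residue_surjective (hinv hPQ)
    (hinv hPQ.symm) hdisj).imp (hzero hPQ) (hzero hPQ.symm)

/-- The size of the head is an isomorphism invariant. -/
theorem eq_of_linearEquiv_of_ker_eq {M N : Type*} [AddCommGroup M] [Module R M]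
    [AddCommGroup N] [Module R N] {m n : ℕ} (p : M →ₗ[R] (Fin m → ResidueField R))
    (hp : Function.Surjective p) (hpker : LinearMap.ker p = maximalIdeal R • ⊤)
    (q : N →ₗ[R] (Fin n → ResidueField R)) (hq : Function.Surjective q)
    (hqker : LinearMap.ker q = maximalIdeal R • ⊤) (e : M ≃ₗ[R] N) : m = n := by
  have hmap : (LinearMap.ker p).map (e : M →ₗ[R] N) = LinearMap.ker q := by
    rw [hpker, hqker, Submodule.map_smul'', Submodule.map_top, LinearEquiv.range]
  let f : (Fin m → ResidueField R) ≃ₗ[R] (Fin n → ResidueField R) :=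
    (p.quotKerEquivOfSurjective hp).symm ≪≫ₗ Submodule.Quotient.equiv _ _ e hmap ≪≫ₗ
      q.quotKerEquivOfSurjective hq
  have := (f.extendScalarsOfSurjective (S := ResidueField R) residue_surjective).finrank_eq
  simpa using this

theorem exists_dual_pair_of_one_lt_finrank [IsNoetherianRing R]
    (h : 1 < Module.finrank (ResidueField R) (CotangentSpace R)) :
    ∃ (a b : maximalIdeal R) (α β : maximalIdeal R →ₗ[R] ResidueField R),
      α a = 1 ∧ α b = 0 ∧ β a = 0 ∧ β b = 1 := by
  let B := Module.finBasis (ResidueField R) (CotangentSpace R)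
  obtain ⟨a, ha⟩ := (maximalIdeal R).toCotangent_surjective (B ⟨0, by omega⟩)
  obtain ⟨b, hb⟩ := (maximalIdeal R).toCotangent_surjective (B ⟨1, h⟩)
  refine ⟨a, b, (B.coord ⟨0, by omega⟩).restrictScalars R ∘ₗ (maximalIdeal R).toCotangent,
    (B.coord ⟨1, h⟩).restrictScalars R ∘ₗ (maximalIdeal R).toCotangent, ?_⟩
  simp [ha, hb]

end Local

/-- A module with head of dimension `n` on which `b` acts as `a` composed with the shift. -/
theorem exists_module_leftShift {R : Type} [CommRing R] [IsLocalRing R] {a b : maximalIdeal R}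
    {α β : maximalIdeal R →ₗ[R] ResidueField R}
    (hαa : α a = 1) (hαb : α b = 0) (hβa : β a = 0) (hβb : β b = 1) (n : ℕ) :
    ∃ (M : ModuleCat.{0} R) (p : M →ₗ[R] (Fin n → ResidueField R)),
      Module.Finite R M ∧ Function.Surjective p ∧ LinearMap.ker p = maximalIdeal R • ⊤ ∧
      ∀ x y : M, (b : R) • x = (a : R) • y ↔ p y = leftShift n (p x) := by
  let I := maximalIdeal R
  let ι : (Fin n → I) →ₗ[R] (Fin n → R) := I.subtype.compLeft (Fin n)
  have hι : Function.Injective ι := fun u v huv => by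
    ext i
    exact congrFun huv i
  let π : (Fin n → R) →ₗ[R] (Fin n → ResidueField R) :=
    (Algebra.linearMap R (ResidueField R)).compLeft (Fin n)
  have hπ : Function.Surjective π := fun v => by
    choose w hw using fun i => residue_surjective (v i)
    exact ⟨w, funext hw⟩
  let θ : (Fin n → I) →ₗ[R] (Fin n → ResidueField R) := LinearMap.pi fun i =>
    α ∘ₗ LinearMap.proj i +
      if h : (i : ℕ) + 1 < n then β ∘ₗ LinearMap.proj ⟨i + 1, h⟩ else 0
  let K : Submodule R (Fin n → R) := (LinearMap.ker θ).map ι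
  have hker : ∀ v, π v = 0 ↔ ∃ w, ι w = v := by
    intro v
    constructor
    · intro hv
      have hv' : ∀ i, v i ∈ I := fun i => (residue_eq_zero_iff _).mp (congrFun hv i)
      exact ⟨fun i => ⟨v i, hv' i⟩, rfl⟩
    · rintro ⟨w, rfl⟩
      ext i
      exact (residue_eq_zero_iff _).mpr (w i).2
  have hK : K ≤ LinearMap.ker π := by
    rintro _ ⟨w, -, rfl⟩
    exact (hker _).mpr ⟨w, rfl⟩
  refine ⟨ModuleCat.of R ((Fin n → R) ⧸ K), K.liftQ π hK, ?_, ?_, ?_, ?_⟩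
  · exact inferInstanceAs (Module.Finite R ((Fin n → R) ⧸ K))
  · intro v
    obtain ⟨w, rfl⟩ := hπ v
    exact ⟨K.mkQ w, K.liftQ_apply π w⟩
  · apply le_antisymm
    · intro x hx
      obtain ⟨v, rfl⟩ := K.mkQ_surjective x
      have hv : π v = 0 := by simpa using hx
      obtain ⟨w, rfl⟩ := (hker _).mp hv
      have : ι w = ∑ i, (w i : R) • (Pi.single i 1 : Fin n → R) := by
        ext j
        simp [ι, Finset.sum_apply, Pi.single_apply]
      rw [this, map_sum]
      refine Submodule.sum_mem _ fun i _ => ?_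
      rw [map_smul]
      exact Submodule.smul_mem_smul (w i).2 Submodule.mem_top
    · rw [Submodule.smul_le]
      intro r hr x _
      rw [LinearMap.mem_ker, map_smul]
      ext i
      rw [Pi.smul_apply, Algebra.smul_def]
      simp [(residue_eq_zero_iff r).mpr hr]
  · intro x y
    obtain ⟨u, rfl⟩ := K.mkQ_surjective x
    obtain ⟨v, rfl⟩ := K.mkQ_surjective y
    let w : Fin n → I := fun i => u i • b - v i • a
    have hw : ι w = (b : R) • u - (a : R) • v := by
      ext i
      simp [ι, w, mul_comm]
    have hθ : θ w = leftShift n (π u) - π v := by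
      ext i
      by_cases h : (i : ℕ) + 1 < n
      · simp [θ, w, leftShift, π, h, hαa, hαb, hβa, hβb, Algebra.smul_def]
        ring
      · simp [θ, w, leftShift, π, h, hαa, hαb, Algebra.smul_def]
    have : (b : R) • K.mkQ u = (a : R) • K.mkQ v ↔ θ w = 0 := by
      rw [← sub_eq_zero, ← map_smul, ← map_smul, ← map_sub, ← hw, ← LinearMap.mem_ker,
        Submodule.ker_mkQ, ← LinearMap.mem_ker]
      exact hι.mem_set_image
    refine this.trans ?_
    rw [hθ, sub_eq_zero, eq_comm]
    rfl

theorem not_hasFiniteCMType0_of_one_lt_finrank {R : Type} [CommRing R] [IsLocalRing R]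
    [IsNoetherianRing R] (h : 1 < Module.finrank (ResidueField R) (CotangentSpace R)) :
    ¬ HasFiniteCMType0 R := by
  rintro ⟨s, hs, hcover⟩
  obtain ⟨a, b, α, β, hαa, hαb, hβa, hβb⟩ := exists_dual_pair_of_one_lt_finrank h
  choose M p hfin hsurj hker hab using
    fun n : ℕ => exists_module_leftShift hαa hαb hβa hβb (n + 1)
  have hind : ∀ n, IsIndecomposableModule R (M n) := fun n =>
    have := hfin n
    isIndecomposableModule_of_leftShift (p n) (hsurj n) (hker n) (hab n)
  choose N hNs hN using fun n => hcover (M n) (hfin n) (hind n)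
  have hinj : Function.Injective N := by
    intro i j hij
    obtain ⟨e⟩ := hN i
    obtain ⟨f⟩ := hN j
    rw [← hij] at f
    have := eq_of_linearEquiv_of_ker_eq (p i) (hsurj i) (hker i) (p j) (hsurj j) (hker j)
      (e ≪≫ₗ f.symm)
    omega
  exact Set.infinite_of_injective_forall_mem hinj hNs hs

section Principal

variable {R : Type*} [CommRing R] [IsLocalRing R] {t : R}
  {M : Type*} [AddCommGroup M] [Module R M]

theorem pow_succ_dvd_of_smul_eq_zero (ht : maximalIdeal R = Ideal.span {t}) {c : ℕ} {x : M}
    (hx : t ^ c • x ≠ 0) {r : R} (hr : r • x = 0) : t ^ (c + 1) ∣ r := by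
  suffices ∀ j ≤ c + 1, t ^ j ∣ r from this _ le_rfl
  intro j
  induction j with
  | zero => simp
  | succ j ih =>
    intro hj
    obtain ⟨s, rfl⟩ := ih (by omega)
    by_cases hs : IsUnit s
    · refine absurd ?_ hx
      obtain ⟨u, rfl⟩ := hs
      have : t ^ c = t ^ (c - j) * ↑u⁻¹ * (t ^ j * u) := by
        rw [show t ^ c = t ^ (c - j) * t ^ j by rw [← pow_add]; congr 1; omega]
        linear_combination (-t ^ (c - j) * t ^ j) * u.inv_mul
      rw [this, mul_smul, hr, smul_zero]
    · have : s ∈ maximalIdeal R := (mem_maximalIdeal s).mpr hs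
      rw [ht, Ideal.mem_span_singleton] at this
      rw [pow_succ]
      exact mul_dvd_mul_left _ this

/-- Over a local ring with principal maximal ideal, a cyclic submodule whose annihilator is
that of the whole module is a direct summand. -/
theorem exists_isCompl_span_singleton [IsNoetherian R M] (ht : maximalIdeal R = Ideal.span {t})
    {c : ℕ} (hM : ∀ y : M, t ^ (c + 1) • y = 0) {x : M} (hx : t ^ c • x ≠ 0) :
    ∃ Q : Submodule R M, IsCompl (Submodule.span R {x}) Q := by
  obtain ⟨Q, hQ, hmax⟩ := WellFounded.has_min (wellFounded_gt (α := Submodule R M))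
    {Q | Disjoint (Submodule.span R {x}) Q} ⟨⊥, disjoint_bot_right⟩
  refine ⟨Q, hQ, codisjoint_iff.mpr ?_⟩
  have hQ' := Submodule.disjoint_def.mp hQ
  have hxs : ∀ r : R, r • x ∈ Submodule.span R {x} := fun r =>
    Submodule.smul_mem _ _ (Submodule.mem_span_singleton_self x)
  set N := Submodule.span R {x} ⊔ Q with hN
  have hstep : ∀ y : M, t • y ∈ N → y ∈ N := by
    intro y hy
    obtain ⟨_, hz, q, hq, hzq⟩ := Submodule.mem_sup.mp hy
    obtain ⟨r, rfl⟩ := Submodule.mem_span_singleton.mp hz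
    have h0 : t ^ c • r • x = 0 := by
      refine hQ' _ (by rw [smul_smul]; exact hxs _) ?_
      have : t ^ c • r • x = -(t ^ c • q) := by
        rw [eq_neg_iff_add_eq_zero, ← smul_add, hzq, smul_smul, ← pow_succ, hM]
      rw [this]
      exact Q.neg_mem (Q.smul_mem _ hq)
    have hrt : t ∣ r := by
      rw [← Ideal.mem_span_singleton, ← ht, mem_maximalIdeal]
      rintro ⟨u, rfl⟩
      refine hx ?_
      rw [smul_comm] at h0
      exact (smul_eq_zero_iff_eq u).mp h0
    obtain ⟨r', rfl⟩ := hrt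
    let y' := y - r' • x
    have hty' : t • y' = q := by
      rw [smul_sub, ← hzq, mul_smul, add_sub_cancel_left]
    suffices y' ∈ N by
      have := N.add_mem this (Submodule.mem_sup_left (hxs r'))
      rwa [sub_add_cancel] at this
    by_contra hy'
    have hlt : Q < Q ⊔ Submodule.span R {y'} := by
      refine lt_of_le_of_ne le_sup_left fun h => hy' (Submodule.mem_sup_right ?_)
      rw [h]
      exact Submodule.mem_sup_right (Submodule.mem_span_singleton_self _)
    refine hmax _ ?_ hlt
    refine Submodule.disjoint_def.mpr fun z hzx hz => ?_
    obtain ⟨q', hq', _, hw, rfl⟩ := Submodule.mem_sup.mp hz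
    obtain ⟨s, rfl⟩ := Submodule.mem_span_singleton.mp hw
    by_cases hs : IsUnit s
    · refine absurd ?_ hy'
      obtain ⟨u, rfl⟩ := hs
      have hmem : (u : R) • y' ∈ N := by
        have := N.sub_mem (Submodule.mem_sup_left hzx) (Submodule.mem_sup_right hq')
        rwa [add_sub_cancel_left] at this
      have := N.smul_mem (↑u⁻¹ : R) hmem
      rwa [smul_smul, Units.inv_mul, one_smul] at this
    · have : s ∈ maximalIdeal R := (mem_maximalIdeal s).mpr hs
      rw [ht, Ideal.mem_span_singleton] at this
      obtain ⟨s', rfl⟩ := this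
      refine hQ' _ hzx (Q.add_mem hq' ?_)
      rw [mul_comm, mul_smul, hty']
      exact Q.smul_mem _ hq
  refine eq_top_iff.mpr fun y _ => ?_
  have hpow : ∀ j, t ^ j • y ∈ N → y ∈ N := by
    intro j
    induction j with
    | zero => simp
    | succ j ih =>
      intro h
      rw [pow_succ', mul_smul] at h
      exact ih (hstep _ h)
  exact hpow (c + 1) (by rw [hM]; exact N.zero_mem)

theorem exists_linearEquiv_quotient_span_pow [IsNoetherian R M]
    (ht : maximalIdeal R = Ideal.span {t}) {e : ℕ} (he : t ^ e = 0)
    (hM : IsIndecomposableModule R M) :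
    ∃ c ≤ e, Nonempty (M ≃ₗ[R] R ⧸ Ideal.span {t ^ c}) := by
  classical
  have hex : ∃ c, ∀ y : M, t ^ c • y = 0 := ⟨e, fun y => by rw [he, zero_smul]⟩
  obtain ⟨hnt, hind⟩ := hM
  obtain ⟨c, hc⟩ : ∃ c, Nat.find hex = c + 1 := by
    refine Nat.exists_eq_succ_of_ne_zero fun h => ?_
    obtain ⟨y, hy⟩ := exists_ne (0 : M)
    exact hy (by simpa [h] using Nat.find_spec hex y)
  have hzero : ∀ y : M, t ^ (c + 1) • y = 0 := hc ▸ Nat.find_spec hex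
  obtain ⟨x, hx⟩ : ∃ x : M, t ^ c • x ≠ 0 := by
    have := Nat.find_min hex (m := c) (by omega)
    push Not at this
    exact this
  have hce : c + 1 ≤ e := hc ▸ Nat.find_min' hex fun y => by rw [he, zero_smul]
  refine ⟨c + 1, hce, ?_⟩
  obtain ⟨Q, hQ⟩ := exists_isCompl_span_singleton ht hzero hx
  have hx0 : Submodule.span R {x} ≠ ⊥ := by
    rw [Ne, Submodule.span_singleton_eq_bot]
    rintro rfl
    exact hx (smul_zero _)
  have hQbot : Q = ⊥ := (hind _ _ hQ).resolve_left hx0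
  have htop : Submodule.span R {x} = ⊤ := by
    have := hQ.sup_eq_top
    rwa [hQbot, sup_bot_eq] at this
  have hker : LinearMap.ker (LinearMap.toSpanSingleton R M x) = Ideal.span {t ^ (c + 1)} := by
    ext r
    rw [LinearMap.mem_ker, LinearMap.toSpanSingleton_apply, Ideal.mem_span_singleton]
    refine ⟨pow_succ_dvd_of_smul_eq_zero ht hx, ?_⟩
    rintro ⟨s, rfl⟩
    rw [mul_smul, hzero]
  have hsurj : Function.Surjective (LinearMap.toSpanSingleton R M x) := by
    rw [← LinearMap.range_eq_top, LinearMap.range_toSpanSingleton, htop]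
  exact ⟨((Submodule.quotEquivOfEq _ _ hker).symm ≪≫ₗ
    (LinearMap.toSpanSingleton R M x).quotKerEquivOfSurjective hsurj).symm⟩

end Principal

theorem hasFiniteCMType0_of_isPrincipal {R : Type} [CommRing R] [IsLocalRing R]
    [IsArtinianRing R] (h : (maximalIdeal R).IsPrincipal) : HasFiniteCMType0 R := by
  obtain ⟨t, ht⟩ := h
  obtain ⟨e, he⟩ := (isArtinianRing_iff_isNilpotent_maximalIdeal R).mp inferInstance
  have hte : t ^ e = 0 := by
    have := Ideal.pow_mem_pow (ht ▸ Submodule.mem_span_singleton_self t : t ∈ maximalIdeal R) e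
    rwa [he] at this
  refine ⟨(fun c => ModuleCat.of R (R ⧸ Ideal.span {t ^ c})) '' Set.Iic e,
    (Set.finite_Iic e).image _, fun N _ hN => ?_⟩
  obtain ⟨c, hc, hiso⟩ := exists_linearEquiv_quotient_span_pow ht hte hN
  exact ⟨_, ⟨c, hc, rfl⟩, hiso⟩

/-- Let `(R, m)` be a zero-dimensional equicharacteristic complete local
(Noetherian) ring.  Then `R` has finite Cohen-Macaulay type if and only if `R` is a
hypersurface, i.e. `dim_k(m/m²) ≤ 1` (equivalently `R ≅ k⟦x⟧/(x^m)`). -/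
theorem stmt17 (R : Type) [CommRing R] [IsLocalRing R] [IsNoetherianRing R]
    (hdim : ringKrullDim R = 0)
    (hcomp : IsAdicComplete (maximalIdeal R) R)
    (hequi : ∃ p : ℕ, CharP R p ∧ CharP (R ⧸ maximalIdeal R) p) :
    HasFiniteCMType0 R ↔
      Module.finrank (R ⧸ maximalIdeal R) (maximalIdeal R).Cotangent ≤ 1 := by
  have : IsArtinianRing R := by
    rw [isArtinianRing_iff_krullDimLE_zero, Ring.KrullDimLE, Order.krullDimLE_iff,
      ← ringKrullDim, hdim]
    rfl
  refine ⟨fun h => not_lt.mp fun hlt => not_hasFiniteCMType0_of_one_lt_finrank hlt h, fun h => ?_⟩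
  exact hasFiniteCMType0_of_isPrincipal (finrank_cotangentSpace_le_one_iff.mp h)
end
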